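/- arXiv:2206.14224 — 5 statements merged into one kernel-verified Lean document; each statement's English description precedes it below -/
import Mathlib

section
/- Let f : S_∞(2^{<ℕ}) → S_∞(2^{<ℕ}) be a Borel map. Then there exists a Ramsey conull set 𝓓 ⊆ S_∞(2^{<ℕ}) such that for all B ∈ 𝓓 and all A ∈ S_∞(2^{<ℕ}) with A ≤ B, if f(A) ≤ B then f(A) ≤ A. -/
/-- The `ℓ`-th splitting level (height) of a subset `A` of the full binary tree `2^{<ℕ}`
(finite binary strings, modelled as `List Bool`): the `ℓ`-th smallest length of a member
of `A`. -/
noncomputable def levelOf (A : Set (List Bool)) (ℓ : ℕ) : ℕ :=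
  Nat.nth (fun h => ∃ a ∈ A, a.length = h) ℓ

/-- `A` is an (infinite) strong subtree of `2^{<ℕ}`: there is a strictly increasing sequence
`k₀ < k₁ < ⋯` such that `A` is partitioned into its level sets `A(ℓ) = A ∩ 2^{k_ℓ}`,
`A(0)` is a singleton (the root), every `a ∈ A(ℓ)` and `i ∈ {0,1}` admit exactly one
`b ∈ A(ℓ+1)` extending `a⌢i`, and every member of `A(ℓ+1)` arises this way. -/
def IsStrongSubtree (A : Set (List Bool)) : Prop :=
  ∃ k : ℕ → ℕ, StrictMono k ∧
    (∀ a ∈ A, ∃ ℓ, a.length = k ℓ) ∧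
    (∃! a, a ∈ A ∧ a.length = k 0) ∧
    (∀ ℓ : ℕ, ∀ a ∈ A, a.length = k ℓ → ∀ i : Bool,
      ∃! b, b ∈ A ∧ b.length = k (ℓ + 1) ∧ (a ++ [i]) <+: b) ∧
    (∀ ℓ : ℕ, ∀ b ∈ A, b.length = k (ℓ + 1) →
      ∃ a ∈ A, a.length = k ℓ ∧ ∃ i : Bool, (a ++ [i]) <+: b)

/-- The Milliken space `S_∞(2^{<ℕ})` of all strong subtrees of `2^{<ℕ}`, viewed as a subset of
the Polish space `2^{2^{<ℕ}}` with the induced Borel structure. -/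
def Sinf : Type := {A : Set (List Bool) // IsStrongSubtree A}

instance : MeasurableSpace Sinf :=
  inferInstanceAs (MeasurableSpace {A : Set (List Bool) // IsStrongSubtree A})

/-- The finite approximation `r_n(A) = A(0) ∪ ⋯ ∪ A(n−1)`: members of `A` of height among
the first `n` levels of `A`. -/
noncomputable def approxT (A : Set (List Bool)) (n : ℕ) : Set (List Bool) :=
  {a ∈ A | ∃ ℓ < n, a.length = levelOf A ℓ}

/-- `s ⊑ A`: `s = r_n(A)` for some `n`. -/
def InitSegT (s A : Set (List Bool)) : Prop := ∃ n, s = approxT A n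

/-- The Ellentuck cube `[s, A] = {B ∈ S_∞(2^{<ℕ}) : s ⊑ B and B ⊆ A}`. -/
def cubeT (s : Set (List Bool)) (A : Sinf) : Set Sinf :=
  {B | InitSegT s B.1 ∧ B.1 ⊆ A.1}

/-- `𝓧 ⊆ S_∞(2^{<ℕ})` is Ramsey null. -/
def RamseyNullT (X : Set Sinf) : Prop :=
  ∀ s A, (cubeT s A).Nonempty → ∃ B ∈ cubeT s A, cubeT s B ∩ X = ∅

/-- `𝓧 ⊆ S_∞(2^{<ℕ})` is Ramsey conull. -/
def RamseyConullT (X : Set Sinf) : Prop := RamseyNullT Xᶜ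


namespace MB

@[ext] structure SE where
  toFun : List Bool → List Bool
  len : ∀ s t : List Bool, s.length = t.length → (toFun s).length = (toFun t).length
  ext' : ∀ (t : List Bool) (i : Bool), toFun t ++ [i] <+: toFun (t ++ [i])

instance : CoeFun SE (fun _ => List Bool → List Bool) := ⟨SE.toFun⟩

theorem SE.mono (φ : SE) {s t : List Bool} (h : s <+: t) : φ s <+: φ t := by
  obtain ⟨r, rfl⟩ := h
  induction r using List.reverseRecOn with
  | nil => simp
  | append_singleton r i ih =>
    rw [← List.append_assoc]
    exact ih.trans ((List.prefix_append _ _).trans (φ.ext' _ i))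

theorem SE.ext_cons (φ : SE) (t r : List Bool) (i : Bool) : φ t ++ [i] <+: φ (t ++ i :: r) := by
  refine (φ.ext' t i).trans (φ.mono ?_)
  exact ⟨r, by simp⟩

instance : Monoid SE where
  mul φ ψ := ⟨fun t => φ (ψ t), fun s t h => φ.len _ _ (ψ.len _ _ h),
    fun t i => (φ.ext' _ i).trans (φ.mono (ψ.ext' t i))⟩
  one := ⟨fun t => t, fun _ _ h => h, fun _ _ => List.prefix_rfl⟩
  mul_assoc _ _ _ := rfl
  one_mul _ := rfl
  mul_one _ := rfl

@[simp] theorem mul_apply (φ ψ : SE) (t : List Bool) : (φ * ψ) t = φ (ψ t) := rfl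
@[simp] theorem one_apply (t : List Bool) : (1 : SE) t = t := rfl

theorem SE.ext_fun {φ ψ : SE} (h : ∀ t, φ t = ψ t) : φ = ψ := SE.ext (funext h)

theorem SE.len_lt (φ : SE) {s t : List Bool} (h : s.length < t.length) :
    (φ s).length < (φ t).length := by
  obtain ⟨u, i, r, rfl, hu⟩ : ∃ u i r, t = u ++ i :: r ∧ u.length = s.length := by
    refine ⟨t.take s.length, t[s.length], t.drop (s.length + 1), ?_, by simp; omega⟩
    simp
  rw [φ.len s u hu.symm]
  have := (φ.ext_cons u r i).length_le
  simp at this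
  omega

theorem SE.len_le (φ : SE) {s t : List Bool} (h : s.length ≤ t.length) :
    (φ s).length ≤ (φ t).length := by
  rcases h.lt_or_eq with h | h
  · exact (φ.len_lt h).le
  · exact (φ.len _ _ h).le

theorem SE.len_eq_iff (φ : SE) {s t : List Bool} :
    (φ s).length = (φ t).length ↔ s.length = t.length := by
  refine ⟨fun h => ?_, φ.len s t⟩
  rcases lt_trichotomy s.length t.length with h' | h' | h'
  · have := φ.len_lt h'; omega
  · exact h'
  · have := φ.len_lt h'; omega

theorem SE.le_len (φ : SE) (t : List Bool) : t.length ≤ (φ t).length := by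
  induction t using List.reverseRecOn with
  | nil => simp
  | append_singleton t i ih =>
    have := (φ.ext' t i).length_le
    simp at this ⊢
    omega

theorem prefix_or_split (a b : List Bool) : a <+: b ∨ b <+: a ∨
    ∃ c i r r', a = c ++ i :: r ∧ b = c ++ (!i) :: r' := by
  induction a generalizing b with
  | nil => simp
  | cons x a ih =>
    cases b with
    | nil => simp
    | cons y b =>
      by_cases hxy : x = y
      · subst hxy
        rcases ih b with h | h | ⟨c, i, r, r', rfl, rfl⟩
        · left; simpa using h
        · right; left; simpa using h
        · right; right; exact ⟨x :: c, i, r, r', by simp, by simp⟩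
      · right; right
        refine ⟨[], x, a, b, by simp, ?_⟩
        cases x <;> cases y <;> simp_all

theorem snoc_prefix_unique {w z : List Bool} {i j : Bool} (h1 : w ++ [i] <+: z)
    (h2 : w ++ [j] <+: z) : i = j := by
  have := List.prefix_of_prefix_length_le h1 h2 (by simp)
  simpa using this.eq_of_length (by simp)

theorem SE.inj (φ : SE) {s t : List Bool} (h : φ s = φ t) : s = t := by
  have hl : s.length = t.length := φ.len_eq_iff.1 (by rw [h])
  rcases prefix_or_split s t with h' | h' | ⟨c, i, r, r', rfl, rfl⟩
  · exact h'.eq_of_length hl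
  · exact (h'.eq_of_length hl.symm).symm
  · have h1 := φ.ext_cons c r i
    have h2 := φ.ext_cons c r' (!i)
    rw [h] at h1
    have := snoc_prefix_unique h1 h2
    simp at this

theorem SE.meet (ψ : SE) {w a b : List Bool} {i : Bool} (ha : w ++ [i] <+: ψ a)
    (hb : w ++ [!i] <+: ψ b) : ∃ c, ψ c = w := by
  rcases prefix_or_split a b with h | h | ⟨c, j, r, r', rfl, rfl⟩
  · have := snoc_prefix_unique (ha.trans (ψ.mono h)) hb
    simp at this
  · have := snoc_prefix_unique (hb.trans (ψ.mono h)) ha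
    simp at this
  · refine ⟨c, ?_⟩
    have h1 := ψ.ext_cons c r j
    have h2 := ψ.ext_cons c r' (!j)
    rcases lt_trichotomy (ψ c).length w.length with h | h | h
    · have h3 : ψ c ++ [j] <+: w := List.prefix_of_prefix_length_le h1
        ((List.prefix_append _ _).trans ha) (by simp; omega)
      have h4 : ψ c ++ [!j] <+: w := List.prefix_of_prefix_length_le h2
        ((List.prefix_append _ _).trans hb) (by simp; omega)
      have := snoc_prefix_unique h3 h4
      simp at this
    · exact (List.prefix_of_prefix_length_le ((List.prefix_append _ _).trans h1)
        ((List.prefix_append _ _).trans ha) h.le).eq_of_length h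
    · have h3 : w ++ [i] <+: ψ c := List.prefix_of_prefix_length_le ha
        ((List.prefix_append _ _).trans h1) (by simp; omega)
      have h4 : w ++ [!i] <+: ψ c := List.prefix_of_prefix_length_le hb
        ((List.prefix_append _ _).trans h2) (by simp; omega)
      have := snoc_prefix_unique h3 h4
      simp at this

/-- `χ` fixes all nodes of length `< n`. -/
def Fix (n : ℕ) (χ : SE) : Prop := ∀ t : List Bool, t.length < n → χ t = t

theorem Fix.one (n : ℕ) : Fix n 1 := fun _ _ => rfl
theorem Fix.mul {n : ℕ} {χ θ : SE} (h1 : Fix n χ) (h2 : Fix n θ) : Fix n (χ * θ) := by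
  intro t ht; simp [h2 t ht, h1 t ht]
theorem Fix.mono {n m : ℕ} {χ : SE} (h : Fix n χ) (hm : m ≤ n) : Fix m χ :=
  fun t ht => h t (by omega)

theorem Fix.pfx {n : ℕ} {χ : SE} (h : Fix n χ) {t : List Bool} (ht : t.length ≤ n) :
    t <+: χ t := by
  induction t using List.reverseRecOn with
  | nil => simp
  | append_singleton t i ih =>
    have := χ.ext' t i
    simp at ht
    rwa [h t (by omega)] at this

/-- agreement on levels `< k`. -/
def Agree (k : ℕ) (φ ψ : SE) : Prop := ∀ t : List Bool, t.length < k → φ t = ψ t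

theorem Agree.mul_left {k : ℕ} {φ ψ : SE} (h : Agree k φ ψ) (C : SE) : Agree k (C * φ) (C * ψ) :=
  fun t ht => by simp [h t ht]
theorem Agree.symm {k : ℕ} {φ ψ : SE} (h : Agree k φ ψ) : Agree k ψ φ :=
  fun t ht => (h t ht).symm
theorem Agree.trans {k : ℕ} {φ ψ χ : SE} (h : Agree k φ ψ) (h' : Agree k ψ χ) : Agree k φ χ :=
  fun t ht => (h t ht).trans (h' t ht)

/-! ### Fusion -/

def R (χ : ℕ → SE) : ℕ → ℕ → SE
  | _, 0 => 1
  | j, m + 1 => χ j * R χ (j + 1) m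

theorem R_succ (χ : ℕ → SE) (j m : ℕ) : R χ j (m + 1) = R χ j m * χ (j + m) := by
  induction m generalizing j with
  | zero => simp [R]
  | succ m ih =>
    rw [R, ih, R, mul_assoc]
    congr 3
    omega

theorem exists_infinite_product (n : ℕ) (χ : ℕ → SE) (h : ∀ j, Fix (n + j) (χ j)) :
    ∃ l : ℕ → SE, (∀ j, Fix (n + j) (l j)) ∧ ∀ j, l j = χ j * l (j + 1) := by
  have stab : ∀ j t m, t.length < m → R χ j m t = R χ j (t.length + 1) t := by
    intro j t m hm
    induction m with
    | zero => omega
    | succ m ih =>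
      rcases Nat.lt_succ_iff_lt_or_eq.1 hm with h' | h'
      · rw [R_succ, mul_apply, h _ t (by omega), ih h']
      · rw [h']
  have fixR : ∀ m j, Fix (n + j) (R χ j m) := by
    intro m
    induction m with
    | zero => exact fun j => Fix.one _
    | succ m ih => exact fun j => (h j).mul ((ih (j + 1)).mono (by omega))
  refine ⟨fun j => ⟨fun t => R χ j (t.length + 1) t, ?_, ?_⟩, ?_, ?_⟩
  · intro s t hst
    simp only [hst]
    exact (R χ j _).len _ _ hst
  · intro t i
    rw [← stab j t ((t ++ [i]).length + 1) (by simp)]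
    exact (R χ j _).ext' t i
  · intro j t ht
    exact fixR (t.length + 1) j t ht
  · intro j
    apply SE.ext_fun
    intro t
    change R χ j (t.length + 1) t = χ j (R χ (j + 1) (t.length + 1) t)
    rw [← stab j t (t.length + 2) (by omega)]
    rfl

theorem fusion (P : ℕ → SE → Prop)
    (her : ∀ N φ χ, P N φ → Fix N χ → P N (φ * χ))
    (n : ℕ) (φ : SE)
    (dense : ∀ N ψ, n ≤ N → Fix n ψ → ∃ χ, Fix N χ ∧ P N (φ * ψ * χ)) :
    ∃ χ, Fix n χ ∧ ∀ N, n ≤ N → P N (φ * χ) := by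
  choose! c hc1 hc2 using dense
  let Φ : ℕ → SE := fun j => Nat.rec 1 (fun j ψ => ψ * c (n + j) ψ) j
  have hΦ : ∀ j, Φ (j + 1) = Φ j * c (n + j) (Φ j) := fun j => rfl
  have hfix : ∀ j, Fix n (Φ j) := by
    intro j
    induction j with
    | zero => exact Fix.one n
    | succ j ih =>
      rw [hΦ]
      exact ih.mul ((hc1 _ _ (by omega) ih).mono (by omega))
  obtain ⟨l, hl1, hl2⟩ := exists_infinite_product n (fun j => c (n + j) (Φ j))
    (fun j => hc1 _ _ (by omega) (hfix j))
  have key : ∀ j, Φ j * l j = l 0 := by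
    intro j
    induction j with
    | zero => exact one_mul _
    | succ j ih => rw [hΦ, mul_assoc, ← hl2 j, ih]
  refine ⟨l 0, (hl1 0).mono (by omega), ?_⟩
  intro N hN
  obtain ⟨j, rfl⟩ := Nat.exists_eq_add_of_le hN
  rw [← key (j + 1), ← mul_assoc, hΦ, ← mul_assoc]
  exact her _ _ _ (hc2 _ _ (by omega) (hfix j)) ((hl1 (j + 1)).mono (by omega))

theorem finite_dense {ι : Type*} (N : ℕ) (Q : ι → SE → Prop)
    (her : ∀ i φ χ, Q i φ → Fix N χ → Q i (φ * χ)) (J : Set ι) (hJ : J.Finite) (φ : SE)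
    (dense : ∀ i ∈ J, ∀ χ, Fix N χ → ∃ θ, Fix N θ ∧ Q i (φ * χ * θ)) :
    ∃ χ, Fix N χ ∧ ∀ i ∈ J, Q i (φ * χ) := by
  induction J, hJ using Set.Finite.induction_on with
  | empty => exact ⟨1, Fix.one N, by simp⟩
  | @insert a s ha hs ih =>
    obtain ⟨χ, hχ, h⟩ := ih (fun i hi => dense i (Set.mem_insert_of_mem _ hi))
    obtain ⟨θ, hθ, h'⟩ := dense a (Set.mem_insert _ _) χ hχ
    refine ⟨χ * θ, hχ.mul hθ, ?_⟩
    rintro i (rfl | hi)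
    · rwa [← mul_assoc]
    · rw [← mul_assoc]; exact her _ _ _ (h i hi) hθ

end MB

namespace MB
/-! ### Canonical embeddings -/

/-- `ψ'` has exactly `k` levels below `N`, its `k`-th level is at height `N`, and it is canonical
above. -/
def IsJ (k N : ℕ) (ψ : SE) : Prop :=
  (∀ t : List Bool, t.length < k → (ψ t).length < N) ∧
  (∀ t : List Bool, t.length = k → (ψ t).length = N) ∧
  (∀ t r : List Bool, t.length = k → ψ (t ++ r) = ψ t ++ r)

theorem IsJ.le {k N : ℕ} {ψ : SE} (h : IsJ k N ψ) : k ≤ N := by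
  have h1 := h.2.1 (List.replicate k false) (by simp)
  have := ψ.le_len (List.replicate k false)
  simp at this
  omega

theorem IsJ.apply_ge {k N : ℕ} {ψ : SE} (h : IsJ k N ψ) {t : List Bool} (ht : k ≤ t.length) :
    ψ t = ψ (t.take k) ++ t.drop k := by
  rw [← h.2.2 _ _ (by simp; omega), List.take_append_drop]

theorem finite_J (N : ℕ) : {x : ℕ × SE | IsJ x.1 N x.2}.Finite := by
  classical
  let S : Set (List Bool) := {l | l.length ≤ N}
  let S' : Set (List Bool) := {l | l.length ≤ N + N}
  have hS : S.Finite := List.finite_length_le Bool N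
  have hS' : S'.Finite := List.finite_length_le Bool (N + N)
  have : Finite S := hS
  have : Finite S' := hS'
  let F : ℕ × SE → Fin (N + 1) × (S → S') := fun x =>
    (⟨min x.1 N, by omega⟩, fun s => if h : (x.2 s.1).length ≤ N + N then ⟨x.2 s.1, h⟩ else
      ⟨[], by simp [S']⟩)
  have hval : ∀ x : ℕ × SE, IsJ x.1 N x.2 → ∀ s : S, ((F x).2 s).1 = x.2 s.1 := by
    intro x hx s
    have hs : s.1.length ≤ N := s.2
    have h : (x.2 s.1).length ≤ N + N := by
      by_cases hk : s.1.length < x.1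
      · have := hx.1 _ hk; omega
      · rw [hx.apply_ge (by omega), List.length_append, hx.2.1 _ (by simp; omega)]
        simp; omega
    simp [F, h]
  refine Set.Finite.of_finite_image (f := F) (Set.toFinite _) ?_
  rintro ⟨k, ψ⟩ hx ⟨k', ψ'⟩ hx' heq
  have hk : k = k' := by
    have h1 := congrArg (fun y => (y.1 : Fin (N + 1)).1) heq
    have := IsJ.le hx
    have := IsJ.le hx'
    simp [F] at h1 this
    simp at *
    omega
  subst hk
  have hkN : k ≤ N := IsJ.le hx
  have heq' : ∀ t : List Bool, t.length ≤ N → ψ t = ψ' t := by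
    intro t ht
    have h1 := hval _ hx ⟨t, ht⟩
    have h2 := hval _ hx' ⟨t, ht⟩
    rw [heq] at h1
    exact h1.symm.trans h2
  congr 1
  apply SE.ext_fun
  intro t
  by_cases ht : t.length ≤ N
  · exact heq' t ht
  · have h1 : IsJ k N ψ := hx
    have h2 : IsJ k N ψ' := hx'
    rw [h1.apply_ge (by omega), h2.apply_ge (by omega), heq' _ (by simp; omega)]

theorem prefix_drop_of_len {a b : List Bool} (N : ℕ) (i : Bool) (h : a ++ [i] <+: b)
    (hN : N ≤ a.length) : a.drop N ++ [i] <+: b.drop N := by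
  obtain ⟨r, rfl⟩ := h
  refine ⟨r, ?_⟩
  rw [List.append_assoc, List.append_assoc, List.drop_append_of_le_length hN]

theorem exists_trunc (ψ : SE) (k N : ℕ) (h1 : ∀ t : List Bool, t.length < k → (ψ t).length < N)
    (h2 : ∀ t : List Bool, t.length = k → N ≤ (ψ t).length) :
    ∃ ψ', IsJ k N ψ' ∧ Agree k ψ ψ' ∧ ∀ t : List Bool, t.length = k → ψ' t = (ψ t).take N := by
  refine ⟨⟨fun t => if t.length < k then ψ t else (ψ (t.take k)).take N ++ t.drop k, ?_, ?_⟩,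
    ⟨?_, ?_, ?_⟩, ?_, ?_⟩
  · intro s t hst
    by_cases hs : s.length < k
    · have ht : t.length < k := by omega
      simp only [hs, ht, if_true]
      exact ψ.len _ _ hst
    · have ht : ¬ t.length < k := by omega
      simp only [hs, ht, if_false]
      have := ψ.len (s.take k) (t.take k) (by simp [hst])
      simp [this, hst]
  · intro t i
    by_cases ht : t.length + 1 < k
    · have ht' : t.length < k := by omega
      simp only [List.length_append, List.length_singleton, ht, ht', if_true]
      exact ψ.ext' t i
    · by_cases ht' : t.length < k
      · simp only [List.length_append, List.length_singleton, ht, ht', if_true, if_false]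
        have e : (t ++ [i]).take k = t ++ [i] := List.take_of_length_le (by simp; omega)
        rw [e]
        refine List.IsPrefix.trans ?_ (List.prefix_append _ _)
        refine List.prefix_take_iff.2 ⟨ψ.ext' t i, ?_⟩
        have := h1 t ht'
        simp; omega
      · simp only [List.length_append, List.length_singleton, ht, ht', if_false]
        rw [List.take_append_of_le_length (by omega), List.drop_append_of_le_length (by omega)]
        simp
  · intro t ht; simp [ht, h1 t ht]
  · intro t ht
    have := h2 t ht
    have e2 : t.take k = t := List.take_of_length_le (by omega)
    simp [ht, e2]; omega
  · intro t r ht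
    have e1 : t.drop k = [] := by simp [ht]
    have e2 : t.take k = t := List.take_of_length_le (by omega)
    simp [ht, e1, e2]
  · intro t ht; simp [ht]
  · intro t ht; simp [← ht]

theorem amalg {k N : ℕ} {ψ' ψ : SE} (hJ : IsJ k N ψ') (hA : Agree k ψ ψ')
    (hp : ∀ t : List Bool, t.length = k → ψ' t <+: ψ t) : ∃ θ, Fix N θ ∧ ψ = θ * ψ' := by
  classical
  let τ : List Bool → List Bool := fun w =>
    if h : ∃ t : List Bool, t.length = k ∧ ψ' t = w then h.choose else List.replicate k false
  have hτlen : ∀ w, (τ w).length = k := by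
    intro w
    by_cases h : ∃ t : List Bool, t.length = k ∧ ψ' t = w
    · simp only [τ, h, dif_pos]; exact h.choose_spec.1
    · simp only [τ, h]; simp
  have hτ : ∀ t : List Bool, t.length = k → τ (ψ' t) = t := by
    intro t ht
    have h : ∃ t' : List Bool, t'.length = k ∧ ψ' t' = ψ' t := ⟨t, ht, rfl⟩
    simp only [τ, h, dif_pos]
    exact ψ'.inj h.choose_spec.2
  have hN : ∀ w r, N ≤ (ψ (τ w ++ r)).length := by
    intro w r
    have h1 := (hp (τ w) (hτlen w)).length_le
    rw [hJ.2.1 _ (hτlen w)] at h1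
    exact h1.trans (ψ.len_le (by simp))
  refine ⟨⟨fun s => if s.length < N then s else
    s.take N ++ (ψ (τ (s.take N) ++ s.drop N)).drop N, ?_, ?_⟩, ?_, ?_⟩
  · intro s t hst
    by_cases hs : s.length < N
    · have ht : t.length < N := by omega
      simp only [hs, ht, if_true]
      exact hst
    · have ht : ¬ t.length < N := by omega
      simp only [hs, ht, if_false]
      have := ψ.len (τ (s.take N) ++ s.drop N) (τ (t.take N) ++ t.drop N) (by simp [hst, hτlen])
      simp [this, hst]
  · intro t i
    by_cases ht : t.length + 1 < N
    · have ht' : t.length < N := by omega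
      simp [ht, ht']
    · by_cases ht' : t.length < N
      · simp only [List.length_append, List.length_singleton, ht, ht', if_true, if_false]
        have e : (t ++ [i]).take N = t ++ [i] := List.take_of_length_le (by simp; omega)
        rw [e]
        exact List.prefix_append _ _
      · simp only [List.length_append, List.length_singleton, ht, ht', if_false]
        rw [List.take_append_of_le_length (by omega), List.drop_append_of_le_length (by omega),
          List.append_assoc, List.prefix_append_right_inj, ← List.append_assoc]
        exact prefix_drop_of_len N i (ψ.ext' _ i) (hN _ _)
  · intro t ht; simp [ht]
  · apply SE.ext_fun
    intro t
    by_cases ht : t.length < k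
    · simp [hJ.1 t ht, hA t ht]
    · have hl : (t.take k).length = k := by simp; omega
      have hl' := hJ.2.1 _ hl
      simp only [mul_apply]
      rw [hJ.apply_ge (by omega)]
      have e1 : (ψ' (t.take k) ++ t.drop k).take N = ψ' (t.take k) := by
        rw [List.take_append_of_le_length (by omega), List.take_of_length_le (by omega)]
      have e2 : (ψ' (t.take k) ++ t.drop k).drop N = t.drop k := by
        rw [← hl']; simp
      have e3 : ¬ (ψ' (t.take k) ++ t.drop k).length < N := by simp; omega
      simp only [e1, e2, e3, if_false]
      rw [hτ _ hl, List.take_append_drop]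
      have h4 : ψ' (t.take k) <+: ψ t := (hp _ hl).trans (ψ.mono (⟨_, List.take_append_drop _ _⟩))
      obtain ⟨r, hr⟩ := h4
      rw [← hr, ← hl']; simp

theorem comm1 {k N : ℕ} {ψ' θ : SE} (hJ : IsJ k N ψ') (hθ : Fix N θ) :
    ∃ ρ, Fix k ρ ∧ θ * ψ' = ψ' * ρ := by
  have hN : ∀ t : List Bool, k ≤ t.length → N ≤ (ψ' t).length := by
    intro t ht
    rw [hJ.apply_ge ht, List.length_append, hJ.2.1 _ (by simp; omega)]
    omega
  refine ⟨⟨fun t => if t.length < k then t else t.take k ++ (θ (ψ' t)).drop N, ?_, ?_⟩, ?_, ?_⟩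
  · intro s t hst
    by_cases hs : s.length < k
    · have ht : t.length < k := by omega
      simp only [hs, ht, if_true]
      exact hst
    · have ht : ¬ t.length < k := by omega
      simp only [hs, ht, if_false]
      have := θ.len _ _ (ψ'.len _ _ hst)
      simp [this, hst]
  · intro t i
    by_cases ht : t.length + 1 < k
    · have ht' : t.length < k := by omega
      simp [ht, ht']
    · by_cases ht' : t.length < k
      · simp only [List.length_append, List.length_singleton, ht, ht', if_true, if_false]
        have e : (t ++ [i]).take k = t ++ [i] := List.take_of_length_le (by simp; omega)
        rw [e]
        exact List.prefix_append _ _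
      · simp only [List.length_append, List.length_singleton, ht, ht', if_false]
        rw [List.take_append_of_le_length (by omega),
          List.append_assoc, List.prefix_append_right_inj]
        exact prefix_drop_of_len N i ((θ * ψ').ext' _ i)
          ((hN _ (by omega)).trans (θ.le_len _))
  · intro t ht; simp [ht]
  · apply SE.ext_fun
    intro t
    by_cases ht : t.length < k
    · simp [ht, hθ _ (hJ.1 t ht)]
    · have hl : (t.take k).length = k := by simp; omega
      have hl' := hJ.2.1 _ hl
      simp only [mul_apply, ht, if_false]
      rw [hJ.2.2 _ _ hl]
      have h4 : ψ' (t.take k) <+: θ (ψ' t) :=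
        (hθ.pfx hl'.le).trans (θ.mono (ψ'.mono (⟨_, List.take_append_drop _ _⟩)))
      obtain ⟨r, hr⟩ := h4
      rw [← hr, ← hl']; simp

theorem comm2 {k N : ℕ} {ψ' ρ : SE} (hJ : IsJ k N ψ') (hρ : Fix k ρ) :
    ∃ θ, Fix N θ ∧ ψ' * ρ = θ * ψ' := by
  refine amalg hJ (fun t ht => by simp [hρ t ht]) (fun t ht => ?_)
  exact ψ'.mono (hρ.pfx ht.le)

/-- factorization at a given height -/
theorem exists_factor (ψ : SE) (N : ℕ) :
    ∃ k ψ' θ, IsJ k N ψ' ∧ Fix N θ ∧ ψ = θ * ψ' := by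
  classical
  have hex : ∃ k, N ≤ (ψ (List.replicate k false)).length := by
    refine ⟨N, ?_⟩
    have := ψ.le_len (List.replicate N false)
    simpa using this
  let k := Nat.find hex
  have h1 : ∀ t : List Bool, t.length < k → (ψ t).length < N := by
    intro t ht
    have := Nat.find_min hex ht
    rw [ψ.len t (List.replicate t.length false) (by simp)]
    omega
  have h2 : ∀ t : List Bool, t.length = k → N ≤ (ψ t).length := by
    intro t ht
    rw [ψ.len t (List.replicate k false) (by simp [ht])]
    exact Nat.find_spec hex
  obtain ⟨ψ', hJ, hA, hT⟩ := exists_trunc ψ k N h1 h2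
  obtain ⟨θ, hθ, h⟩ := amalg hJ hA (fun t ht => by rw [hT t ht]; exact ⟨_, List.take_append_drop _ _⟩)
  exact ⟨k, ψ', θ, hJ, hθ, h⟩

/-- tight factorization -/
theorem exists_tight (ψ : SE) (k : ℕ) :
    ∃ N, k ≤ N ∧ ∃ ψ', IsJ k N ψ' ∧ Agree k ψ ψ' ∧
      ∀ ψ2, Agree k ψ2 ψ → ∃ θ, Fix N θ ∧ ψ2 = θ * ψ' := by
  obtain ⟨N, h1, h2⟩ : ∃ N, (∀ t : List Bool, t.length < k → (ψ t).length < N) ∧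
      (∀ u : List Bool, u.length + 1 = k → (ψ u).length + 1 = N) ∧ (k = 0 → N = 0) := by
    cases k with
    | zero => exact ⟨0, by simp⟩
    | succ j =>
      refine ⟨(ψ (List.replicate j false)).length + 1, ?_, ?_, by simp⟩
      · intro t ht
        have := ψ.len_le (s := t) (t := List.replicate j false) (by simp; omega)
        omega
      · intro u hu
        rw [ψ.len u (List.replicate j false) (by simp; omega)]
  have hpre : ∀ ψ2, Agree k ψ2 ψ → ∀ t : List Bool, t.length = k →
      ∃ z : List Bool, z.length = N ∧ z <+: ψ2 t ∧ z <+: ψ t := by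
    intro ψ2 h t ht
    rcases List.eq_nil_or_concat t with rfl | ⟨u, i, rfl⟩
    · exact ⟨[], by simp [h2.2 ht.symm], by simp, by simp⟩
    · simp at ht
      refine ⟨ψ u ++ [i], by simp [h2.1 u ht], ?_, ?_⟩
      · rw [← h u (by omega)]; simpa using ψ2.ext' u i
      · simpa using ψ.ext' u i
  obtain ⟨ψ', hJ, hA, hT⟩ := exists_trunc ψ k N h1 (fun t ht => by
    obtain ⟨z, hz, hz', -⟩ := hpre ψ (fun _ _ => rfl) t ht
    have := hz'.length_le
    omega)
  refine ⟨N, hJ.le, ψ', hJ, hA, fun ψ2 h => amalg hJ (h.trans hA) (fun t ht => ?_)⟩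
  obtain ⟨z, hz, hz', hz''⟩ := hpre ψ2 h t ht
  have : ψ' t = z := by
    rw [hT t ht]
    obtain ⟨r, hr⟩ := hz''
    rw [← hr, ← hz]; simp
  rwa [this]

/-! ### Insertion maps -/

def ins (N : ℕ) (ε : List Bool → Bool) : SE where
  toFun s := if s.length < N then s else s.take N ++ ε (s.take N) :: s.drop N
  len s t hst := by
    by_cases hs : s.length < N
    · have ht : t.length < N := by omega
      simp only [hs, ht, if_true]
      exact hst
    · have ht : ¬ t.length < N := by omega
      simp only [hs, ht, if_false]
      simp [hst]
  ext' t i := by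
    by_cases ht : t.length + 1 < N
    · have ht' : t.length < N := by omega
      simp [ht, ht']
    · by_cases ht' : t.length < N
      · simp only [List.length_append, List.length_singleton, ht, ht', if_true, if_false]
        have e : (t ++ [i]).take N = t ++ [i] := List.take_of_length_le (by simp; omega)
        rw [e]
        exact List.prefix_append _ _
      · simp only [List.length_append, List.length_singleton, ht, ht', if_false]
        rw [List.take_append_of_le_length (by omega), List.drop_append_of_le_length (by omega)]
        simp

theorem ins_fix (N : ℕ) (ε : List Bool → Bool) : Fix N (ins N ε) := by
  intro t ht; simp [ins, ht]

theorem ins_apply (N : ℕ) (ε : List Bool → Bool) {s : List Bool} (h : N ≤ s.length) :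
    ins N ε s = s.take N ++ ε (s.take N) :: s.drop N := by
  simp [ins, h]

theorem exists_move (ψ : SE) (p : List Bool) (hp : ∀ t, ψ t ≠ p) :
    ∃ θ₁ θ₂, Fix p.length θ₁ ∧ Fix p.length θ₂ ∧ θ₁ * ψ = θ₂ * ψ ∧ θ₁ p ≠ θ₂ p := by
  classical
  set N := p.length with hN
  by_cases hit : ∃ t, (ψ t).length = N
  · obtain ⟨t, ht⟩ := hit
    refine ⟨ins N (fun _ => false), ins N (fun w => if w = p then true else false),
      ins_fix _ _, ins_fix _ _, ?_, ?_⟩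
    · apply SE.ext_fun
      intro s
      simp only [mul_apply]
      by_cases hs : (ψ s).length < N
      · rw [ins_fix N _ _ hs, ins_fix N _ _ hs]
      · rw [ins_apply _ _ (by omega), ins_apply _ _ (by omega)]
        have hts : t.length ≤ s.length := by
          by_contra hc
          have := ψ.len_lt (s := s) (t := t) (by omega)
          omega
        have h1 : ψ (s.take t.length) = (ψ s).take N := by
          obtain ⟨r, hr⟩ := ψ.mono (s := s.take t.length) (t := s) ⟨_, List.take_append_drop _ _⟩
          have : (ψ (s.take t.length)).length = N := by
            rw [← ht]; apply ψ.len; simp; omega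
          rw [← hr, ← this]; simp
        have h2 : (ψ s).take N ≠ p := by rw [← h1]; exact hp _
        simp [h2]
    · rw [ins_apply _ _ hN.le, ins_apply _ _ hN.le]
      simp [hN]
  · push Not at hit
    let d : List Bool → Bool := fun w => decide (∃ t, w ++ [true] <+: ψ t)
    refine ⟨ins (N + 1) (fun v => d (v.take N)), ins N d,
      (ins_fix _ _).mono (by omega), ins_fix _ _, ?_, ?_⟩
    · apply SE.ext_fun
      intro s
      simp only [mul_apply]
      rcases lt_or_gt_of_ne (hit s) with hs | hs
      · rw [ins_fix (N + 1) _ _ (by omega), ins_fix N _ _ hs]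
      · obtain ⟨w, i, r, hw, hwl⟩ : ∃ w i r, ψ s = w ++ i :: r ∧ w.length = N := by
          refine ⟨(ψ s).take N, (ψ s)[N], (ψ s).drop (N + 1), ?_, by simp; omega⟩
          simp
        have hd : d w = i := by
          have hi : w ++ [i] <+: ψ s := ⟨r, by simp [hw]⟩
          cases i with
          | true => simp only [d, decide_eq_true_eq]; exact ⟨s, hi⟩
          | false =>
            simp only [d, decide_eq_false_iff_not]
            rintro ⟨t, ht⟩
            obtain ⟨c, hc⟩ := ψ.meet (i := true) ht hi
            exact hit c (by rw [hc, hwl])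
        rw [ins_apply _ _ (by omega), ins_apply _ _ (by omega)]
        rw [hw, ← hwl]
        have e1 : w.take (w.length + 1) = w := List.take_of_length_le (by omega)
        have e2 : w.drop (w.length + 1) = [] := List.drop_of_length_le (by omega)
        simp [List.take_append, List.drop_append, hd, e1, e2]
    · rw [ins_fix (N + 1) _ _ (by omega), ins_apply _ _ hN.le]
      intro h
      have := congrArg List.length h
      simp [hN] at this

end MB

namespace MB
/-! ### The Carlson-Simpson theorem -/
section CS
attribute [local instance] Ultrafilter.mul Ultrafilter.semigroup

variable {Λ : Type}

/-- substitution -/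
def sub (a : Λ) (w : FreeMonoid (Option Λ)) : FreeMonoid Λ :=
  FreeMonoid.map (fun o => o.getD a) w

/-- constant part -/
def pre : List (Option Λ) → List Λ
  | [] => []
  | none :: _ => []
  | some a :: w => a :: pre w

def pre' (w : FreeMonoid (Option Λ)) : FreeMonoid Λ := pre (FreeMonoid.toList w)

def emb (w : FreeMonoid Λ) : FreeMonoid (Option Λ) := FreeMonoid.map some w

theorem sub_mul (a : Λ) (v w : FreeMonoid (Option Λ)) : sub a (v * w) = sub a v * sub a w :=
  map_mul _ _ _

theorem sub_emb (a : Λ) (w : FreeMonoid Λ) : sub a (emb w) = w := by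
  have : ∀ l : List Λ, (l.map some).map (fun o : Option Λ => o.getD a) = l := by
    intro l; simp [Function.comp_def]
  exact this w

theorem pre_emb (b : FreeMonoid Λ) (w : FreeMonoid (Option Λ)) :
    pre' (emb b * w) = b * pre' w := by
  have : ∀ l : List Λ, ∀ w : List (Option Λ), pre (l.map some ++ w) = l ++ pre w := by
    intro l w
    induction l with
    | nil => rfl
    | cons a l ih => simp [pre, ih]
  exact this b w

/-- Words with a variable. -/
def IsVar (w : FreeMonoid (Option Λ)) : Prop := none ∈ FreeMonoid.toList w

theorem var_split (w : List (Option Λ)) (h : none ∈ w) :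
    ∃ r, w = (pre w).map some ++ none :: r := by
  induction w with
  | nil => simp at h
  | cons x w ih =>
    cases x with
    | none => exact ⟨w, rfl⟩
    | some a =>
      obtain ⟨r, hr⟩ := ih (by simpa using h)
      exact ⟨r, by simp only [pre, List.map_cons, List.cons_append]; rw [← hr]⟩

theorem map_mul_ultra {M M' : Type} [Mul M] [Mul M'] (h : M → M') (hm : ∀ x y, h (x * y) = h x * h y)
    (U V : Ultrafilter M) : (U * V).map h = U.map h * V.map h := by
  apply Ultrafilter.coe_injective
  ext s
  have h1 := Ultrafilter.eventually_mul (U.map h) (V.map h) (fun x => x ∈ s)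
  have h2 := Ultrafilter.eventually_mul U V (fun x => h x ∈ s)
  simp only [hm] at h2
  exact h2.trans h1.symm

theorem hj_word [Finite Λ] {κ : Type} [Finite κ] (c : FreeMonoid Λ → κ) :
    ∃ w : FreeMonoid (Option Λ), IsVar w ∧ ∀ a b : Λ, c (sub a w) = c (sub b w) := by
  obtain ⟨ι, hι, H⟩ := Combinatorics.Line.exists_mono_in_high_dimension Λ κ
  obtain ⟨l, col, hl⟩ := H (fun x => c (FreeMonoid.ofList
    ((Finset.univ : Finset ι).toList.map x)))
  refine ⟨FreeMonoid.ofList ((Finset.univ : Finset ι).toList.map l.idxFun), ?_, ?_⟩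
  · obtain ⟨i, hi⟩ := l.proper
    exact List.mem_map.2 ⟨i, by simp, hi⟩
  · have key : ∀ a, c (sub a (FreeMonoid.ofList
        ((Finset.univ : Finset ι).toList.map l.idxFun))) = col := by
      intro a
      rw [← hl a]
      congr 1
      change List.map _ (List.map _ _) = List.map _ _
      rw [List.map_map]
      rfl
    intro a b
    rw [key, key]

theorem exists_uv [Finite Λ] [Nonempty Λ] : ∃ (u : Ultrafilter (FreeMonoid Λ))
    (v : Ultrafilter (FreeMonoid (Option Λ))), u * u = u ∧ (∀ᶠ w in (v : Filter (FreeMonoid (Option Λ))), IsVar w) ∧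
    (∀ a : Λ, v.map (sub a) = u) ∧ u * v.map pre' = v.map pre' := by
  classical
  let K : Set (Ultrafilter (FreeMonoid (Option Λ))) :=
    {v | (∀ᶠ w in (v : Filter (FreeMonoid (Option Λ))), IsVar w) ∧ ∀ a b : Λ, v.map (sub a) = v.map (sub b)}
  have hKne : K.Nonempty := by
    let T : Set (FreeMonoid Λ) → Set (Ultrafilter (FreeMonoid (Option Λ))) := fun S =>
      {v | {w | IsVar w ∧ ∀ a b : Λ, sub a w ∈ S ↔ sub b w ∈ S} ∈ v}
    have hne : (⋂ S, T S).Nonempty := by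
      have := CompactSpace.iInter_nonempty (X := Ultrafilter (FreeMonoid (Option Λ))) (t := T)
        (fun S => ultrafilter_isClosed_basic _) ?_
      · exact this
      · intro F
        obtain ⟨w, hw, h⟩ := hj_word (Λ := Λ) (κ := F → Prop) (fun x S => x ∈ S.1)
        refine ⟨pure w, ?_⟩
        simp only [Set.mem_iInter]
        intro S hS
        refine Ultrafilter.mem_pure.2 ⟨hw, fun a b => ?_⟩
        have := congrFun (h a b) ⟨S, hS⟩
        exact this.to_iff
    obtain ⟨v, hv⟩ := hne
    simp only [Set.mem_iInter] at hv
    refine ⟨v, ?_, ?_⟩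
    · filter_upwards [hv ∅] with w hw using hw.1
    · intro a b
      apply Ultrafilter.coe_injective
      ext S
      have h := hv S
      change {w | sub a w ∈ S} ∈ (v : Filter _) ↔ {w | sub b w ∈ S} ∈ (v : Filter _)
      constructor
      · intro h1
        filter_upwards [h, h1] with w hw hw1 using (hw.2 a b).1 hw1
      · intro h1
        filter_upwards [h, h1] with w hw hw1 using (hw.2 b a).1 hw1
  have hKclosed : IsClosed K := by
    have : K = {v | {w | IsVar w} ∈ v} ∩ ⋂ (a : Λ) (b : Λ) (S : Set (FreeMonoid Λ)),
        {v | {w | sub a w ∈ S → sub b w ∈ S} ∈ v} := by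
      ext v
      simp only [K, Set.mem_inter_iff, Set.mem_iInter, Set.mem_ofPred_eq]
      refine and_congr Iff.rfl ?_
      constructor
      · intro h a b S
        by_cases hS : {w | sub a w ∈ S} ∈ v
        · have h1 : S ∈ v.map (sub a) := hS
          rw [h a b] at h1
          filter_upwards [h1] with w hw _ using hw
        · filter_upwards [Ultrafilter.compl_mem_iff_notMem.2 hS] with w hw h' using absurd h' hw
      · intro h a b
        apply Ultrafilter.coe_injective
        ext S
        change {w | sub a w ∈ S} ∈ (v : Filter _) ↔ {w | sub b w ∈ S} ∈ (v : Filter _)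
        constructor
        · intro h1
          filter_upwards [h a b S, h1] with w hw hw1 using hw hw1
        · intro h1
          filter_upwards [h b a S, h1] with w hw hw1 using hw hw1
    rw [this]
    refine (ultrafilter_isClosed_basic _).inter ?_
    exact isClosed_iInter fun a => isClosed_iInter fun b => isClosed_iInter fun S =>
      ultrafilter_isClosed_basic _
  obtain ⟨v0, hv0, hidem⟩ := exists_idempotent_in_compact_subsemigroup
    (fun V => Ultrafilter.continuous_mul_left V) K hKne hKclosed.isCompact (by
      rintro x ⟨hx1, hx2⟩ y ⟨hy1, hy2⟩
      refine ⟨?_, ?_⟩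
      · rw [Ultrafilter.eventually_mul]
        filter_upwards [hx1] with w hw
        filter_upwards with w'
        exact List.mem_append_left _ hw
      · intro a b
        rw [map_mul_ultra _ (sub_mul a), map_mul_ultra _ (sub_mul b), hx2 a b, hy2 a b])
  obtain ⟨hv1, hv2⟩ := hv0
  let a0 : Λ := Classical.arbitrary Λ
  let u := v0.map (sub a0)
  have hu : u * u = u := by
    rw [← map_mul_ultra _ (sub_mul a0), hidem]
  have hemb : ∀ a : Λ, (u.map emb).map (sub a) = u := by
    intro a
    rw [Ultrafilter.map_map]
    have : sub a ∘ emb = (id : FreeMonoid Λ → FreeMonoid Λ) := funext (sub_emb a)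
    rw [this, Ultrafilter.map_id]
  have hembm : ∀ x y : FreeMonoid Λ, emb (x * y) = emb x * emb y := fun x y => map_mul _ _ _
  refine ⟨u, u.map emb * v0, hu, ?_, ?_, ?_⟩
  · rw [Ultrafilter.eventually_mul]
    filter_upwards with w
    filter_upwards [hv1] with w' hw'
    exact List.mem_append_right _ hw'
  · intro a
    rw [map_mul_ultra _ (sub_mul a), hemb, hv2 a a0, hu]
  · have key : ∀ V : Ultrafilter (FreeMonoid (Option Λ)),
        (u.map emb * V).map pre' = u * V.map pre' := by
      intro V
      apply Ultrafilter.coe_injective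
      ext s
      have h1 := Ultrafilter.eventually_mul u (V.map pre') (fun x => x ∈ s)
      have h2 := Ultrafilter.eventually_mul (u.map emb) V (fun x => pre' x ∈ s)
      refine h2.trans (Iff.trans ?_ h1.symm)
      change (∀ᶠ m in u, ∀ᶠ m' in V, pre' (emb m * m') ∈ s) ↔
        ∀ᶠ m in u, ∀ᶠ m' in V, m * pre' m' ∈ s
      simp only [pre_emb]
    rw [key, ← mul_assoc, hu]

/-- One color works. -/
theorem cs_seq [Finite Λ] [Nonempty Λ] (c : List Λ → Prop) :
    ∃ (w0 : List Λ) (W : ℕ → List (Option Λ)) (P : ℕ → Set (List Λ)) (b : Prop),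
      (∀ n, none ∈ W n) ∧ P 0 = {w0} ∧
      (∀ n, ∀ x ∈ P n, ∀ a : Λ, x ++ (W n).map (fun o => o.getD a) ∈ P (n + 1)) ∧
      ∀ n, ∀ x ∈ P n, c (x ++ pre (W n)) ↔ b := by
  classical
  obtain ⟨u, v, hu, hvar, hsub, hpre⟩ := exists_uv (Λ := Λ)
  obtain ⟨b, hb⟩ : ∃ b : Prop, ∀ᶠ (x : FreeMonoid Λ) in (v.map pre' : Filter (FreeMonoid Λ)), (c x ↔ b) := by
    by_cases h : ∀ᶠ (x : FreeMonoid Λ) in (v.map pre' : Filter (FreeMonoid Λ)), c x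
    · exact ⟨True, by simpa using h⟩
    · exact ⟨False, by simpa using Ultrafilter.eventually_not.2 h⟩
  let C : FreeMonoid Λ → Prop := fun x => c x ↔ b
  let C1 : FreeMonoid Λ → Prop := fun s => ∀ᶠ x in v.map pre', C (s * x)
  have hC1 : ∀ᶠ s in u, C1 s := by
    rw [← hpre] at hb
    exact (Ultrafilter.eventually_mul _ _ _).1 hb
  let C2 : FreeMonoid Λ → Prop := fun s => C1 s ∧ ∀ᶠ x in u, C1 (s * x)
  have hC2 : ∀ᶠ s in u, C2 s := by
    refine hC1.and ?_
    rw [← hu] at hC1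
    exact (Ultrafilter.eventually_mul _ _ _).1 hC1
  have hstep2 : ∀ s, C2 s → ∀ᶠ x in u, C2 (s * x) := by
    rintro s ⟨h1, h2⟩
    refine h2.and ?_
    rw [← hu] at h2
    have := (Ultrafilter.eventually_mul _ _ _).1 h2
    simpa only [mul_assoc] using this
  have hstep : ∀ F : Set (List Λ), F.Finite → (∀ x ∈ F, C2 x) → ∃ W : List (Option Λ),
      none ∈ W ∧ (∀ x ∈ F, C (x ++ pre W)) ∧
      ∀ x ∈ F, ∀ a : Λ, C2 (x ++ W.map (fun o => o.getD a)) := by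
    intro F hF hx
    have e1 : ∀ᶠ (w : FreeMonoid (Option Λ)) in (v : Filter (FreeMonoid (Option Λ))), ∀ x ∈ F, C (x ++ pre w) := by
      refine (Filter.eventually_all_finite hF).2 (fun x hxF => ?_)
      exact (hx x hxF).1
    have e2 : ∀ᶠ (w : FreeMonoid (Option Λ)) in (v : Filter (FreeMonoid (Option Λ))),
        ∀ x ∈ F, ∀ a : Λ, C2 (x ++ List.map (fun o : Option Λ => o.getD a) w) := by
      refine (Filter.eventually_all_finite hF).2 (fun x hxF => ?_)
      refine Filter.eventually_all.2 (fun a => ?_)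
      have := hstep2 x (hx x hxF)
      rw [← hsub a] at this
      exact this
    obtain ⟨w, h1, h2, h3⟩ := (hvar.and (e1.and e2)).exists
    exact ⟨w, h1, h2, h3⟩
  choose! W hW1 hW2 hW3 using hstep
  obtain ⟨w0, hw0⟩ := hC2.exists
  obtain ⟨P, hP0, hP⟩ : ∃ P : ℕ → Set (List Λ), P 0 = {w0} ∧ ∀ n, P (n + 1) =
      Set.image2 (fun x a => x ++ (W (P n)).map (fun o => o.getD a)) (P n) Set.univ := by
    refine ⟨fun n => (fun F : Set (List Λ) =>
      Set.image2 (fun x a => x ++ (W F).map (fun o => o.getD a)) F Set.univ)^[n] {w0}, rfl, ?_⟩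
    intro n
    exact Function.iterate_succ_apply' _ _ _
  have hall : ∀ n, (P n).Finite ∧ ∀ x ∈ P n, C2 x := by
    intro n
    induction n with
    | zero =>
      rw [hP0]
      exact ⟨Set.finite_singleton _, by rintro x rfl; exact hw0⟩
    | succ n ih =>
      rw [hP]
      refine ⟨ih.1.image2 _ Set.finite_univ, ?_⟩
      rintro _ ⟨x, hx, a, -, rfl⟩
      exact hW3 _ ih.1 ih.2 x hx a
  refine ⟨w0, fun n => W (P n), P, b, fun n => hW1 _ (hall n).1 (hall n).2, hP0, ?_, ?_⟩
  · intro n x hx a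
    rw [hP]
    exact ⟨x, hx, a, trivial, rfl⟩
  · intro n x hx
    exact hW2 _ (hall n).1 (hall n).2 x hx

theorem cs_tree [Finite Λ] [Nonempty Λ] (c : List Λ → Prop) :
    ∃ (G : List Λ → List Λ) (b : Prop),
      (∀ e e', e.length = e'.length → (G e).length = (G e').length) ∧
      (∀ e a, G e ++ [a] <+: G (e ++ [a])) ∧
      (∀ h : Λ → Bool, ∀ e e', e.map h = e'.map h → (G e).map h = (G e').map h) ∧
      ∀ e, c (G e) ↔ b := by
  obtain ⟨w0, W, P, b, hvar, hP0, hP, hc⟩ := cs_seq c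
  let S : Λ → List (Option Λ) → List Λ := fun a w => w.map (fun o => o.getD a)
  let Q : List Λ → List Λ := fun e => w0 ++ (e.mapIdx (fun i a => S a (W i))).flatten
  have hQ0 : Q [] = w0 := by simp [Q]
  have hQs : ∀ e a, Q (e ++ [a]) = Q e ++ S a (W e.length) := by
    intro e a; simp [Q]
  clear_value Q
  have hQP : ∀ e, Q e ∈ P e.length := by
    intro e
    induction e using List.reverseRecOn with
    | nil => simp [hQ0, hP0]
    | append_singleton e a ih =>
      rw [hQs]
      simpa using hP _ _ ih a
  have hQl : ∀ e e', e.length = e'.length → (Q e).length = (Q e').length := by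
    intro e
    induction e using List.reverseRecOn with
    | nil => intro e' h; simp at h; simp [List.eq_nil_of_length_eq_zero h.symm]
    | append_singleton e a ih =>
      intro e' h
      rcases List.eq_nil_or_concat e' with rfl | ⟨u, i, rfl⟩
      · simp at h
      · simp at h
        have h1 := ih u h
        rw [List.concat_eq_append, hQs, hQs, List.length_append, List.length_append, h1, h]
        simp [S]
  have hS : ∀ (h : Λ → Bool) a a' w, h a = h a' → (S a w).map h = (S a' w).map h := by
    intro h a a' w haa
    simp only [S, List.map_map]
    apply List.map_congr_left
    intro o _
    cases o <;> simp [haa]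
  have hQh : ∀ (h : Λ → Bool) e e', e.map h = e'.map h → (Q e).map h = (Q e').map h := by
    intro h e
    induction e using List.reverseRecOn with
    | nil => intro e' h; simp at h; simp [h]
    | append_singleton e a ih =>
      intro e' hh
      rcases List.eq_nil_or_concat e' with rfl | ⟨u, i, rfl⟩
      · simp at hh
      · rw [List.concat_eq_append, List.map_append, List.map_append] at hh
        obtain ⟨h1, h2⟩ := List.append_inj' hh (by simp)
        have hl : e.length = u.length := by simpa using congrArg List.length h1
        rw [List.concat_eq_append, hQs, hQs, List.map_append, List.map_append, ih u h1, hl,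
          hS h a i _ (by simpa using h2)]
  refine ⟨fun e => Q e ++ pre (W e.length), b, ?_, ?_, ?_, ?_⟩
  · intro e e' h
    simp [hQl e e' h, h]
  · intro e a
    obtain ⟨r, hr⟩ := var_split (W e.length) (hvar _)
    have : S a (W e.length) = pre (W e.length) ++ a :: S a r := by
      conv_lhs => rw [hr]
      simp [S, Function.comp_def]
    simp only [hQs]
    rw [this]
    exact ⟨S a r ++ pre (W (e ++ [a]).length), by simp⟩
  · intro h e e' hh
    have hl : e.length = e'.length := by simpa using congrArg List.length hh
    simp only [List.map_append, hQh h e e' hh, hl]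
  · intro e
    exact hc _ _ (hQP e)

end CS
end MB

namespace MB

/-- Block embedding: identity below level `N`, `w ++ r ↦ w ++ g w r` above. -/
def blockSE (N : ℕ) (g : List Bool → List Bool → List Bool)
    (hl : ∀ w w' r r' : List Bool, r.length = r'.length → (g w r).length = (g w' r').length)
    (he : ∀ w r i, w.length = N → g w r ++ [i] <+: g w (r ++ [i])) : SE where
  toFun s := if s.length < N then s else s.take N ++ g (s.take N) (s.drop N)
  len s t h := by
    by_cases hs : s.length < N
    · have ht : t.length < N := by omega
      simp [ht, h]
    · have ht : ¬ t.length < N := by omega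
      simp only [hs, ht, if_false, List.length_append, List.length_take]
      rw [h, hl (s.take N) (t.take N) (s.drop N) (t.drop N) (by simp [h])]
  ext' t i := by
    by_cases ht : t.length < N
    · by_cases ht' : t.length + 1 < N
      · simp [ht, ht']
      · have : (t ++ [i]).take N = t ++ [i] := List.take_of_length_le (by simp; omega)
        simp [ht, ht', this]
    · have h1 : ¬ (t ++ [i]).length < N := by simp; omega
      have h2 : (t ++ [i]).take N = t.take N := List.take_append_of_le_length (by omega)
      have h3 : (t ++ [i]).drop N = t.drop N ++ [i] := List.drop_append_of_le_length (by omega)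
      simp only [ht, h1, if_false, h2, h3, List.append_assoc]
      exact (List.prefix_append_right_inj _).2 (he _ _ _ (by simp; omega))

theorem blockSE_lt {N g hl he} {t : List Bool} (h : t.length < N) : blockSE N g hl he t = t := by
  simp [blockSE, h]

theorem blockSE_append {N g hl he} {w r : List Bool} (h : w.length = N) :
    blockSE N g hl he (w ++ r) = w ++ g w r := by
  subst h
  simp [blockSE]

theorem PH0 (N : ℕ) (Y : SE → Prop) (hY : ∀ φ ψ, Agree (N+1) φ ψ → (Y φ ↔ Y ψ)) :
    ∃ ψ, Fix N ψ ∧ ((∀ χ, Fix N χ → Y (ψ*χ)) ∨ (∀ χ, Fix N χ → ¬ Y (ψ*χ))) := by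
  classical
  let W : Type := {w : List Bool // w.length = N}
  have : Finite W := List.finite_length_eq Bool N
  let Λ : Type := W → Bool
  have : Finite Λ := inferInstanceAs (Finite (W → Bool))
  have : Nonempty Λ := inferInstanceAs (Nonempty (W → Bool))
  let ev : List Bool → Λ → Bool := fun w a => if h : w.length = N then a ⟨w, h⟩ else false
  let ρ : List Λ → SE := fun e => blockSE N (fun w r => e.map (ev w) ++ r)
    (by intro w w' r r' h; simp [h]) (by intro w r i _; simp)
  obtain ⟨G, b, hGl, hGe, hGn, hGc⟩ := cs_tree (fun e => Y (ρ e))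
  let ct : Bool → Λ := fun b _ => b
  let ψ : SE := blockSE N (fun w r => (G (r.map ct)).map (ev w))
    (by
      intro w w' r r' h
      rw [List.length_map, List.length_map]
      exact hGl _ _ (by simp [h]))
    (by
      intro w r i hw
      have := (hGe (r.map ct) (ct i)).map (ev w)
      simpa [ev, hw, ct] using this)
  have hψ : Fix N ψ := fun t ht => blockSE_lt ht
  refine ⟨ψ, hψ, ?_⟩
  have key : ∀ χ, Fix N χ → (Y (ψ * χ) ↔ b) := by
    intro χ hχ
    let M := (χ (List.replicate N false)).length - N
    let e : List Λ := List.ofFn (fun j : Fin M => fun w : W => (χ w.1).getD (N + j) false)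
    rw [← hGc e]
    apply hY
    intro t ht
    rcases Nat.lt_succ_iff_lt_or_eq.1 ht with ht | ht
    · simp only [mul_apply]
      rw [hχ t ht, hψ t ht]
      exact (blockSE_lt ht).symm
    · have hlen : (χ t).length = (χ (List.replicate N false)).length := χ.len _ _ (by simp [ht])
      obtain ⟨d, hd⟩ : t <+: χ t := hχ.pfx ht.le
      have hdl : d.length = M := by
        have := congrArg List.length hd
        simp at this
        simp only [M]; omega
      have hed : e.map (ev t) = d := by
        apply List.ext_getElem
        · simp [e, hdl]
        · intro i h1 h2
          simp [e, ev, ht, ← hd, h2]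
      have hcd : (d.map ct).map (ev t) = d := by
        simp [ev, ht, ct, Function.comp_def]
      simp only [mul_apply]
      rw [← hd]
      have h2 : ρ (G e) t = t ++ ((G e).map (ev t) ++ []) := by
        conv_lhs => rw [← List.append_nil t]
        exact blockSE_append ht
      rw [h2, List.append_nil]
      refine (blockSE_append ht).trans ?_
      rw [hGn (ev t) (d.map ct) e (by rw [hcd, hed])]
  by_cases hb : b
  · left; intro χ hχ; exact (key χ hχ).2 hb
  · right; intro χ hχ h; exact hb ((key χ hχ).1 h)

end MB

namespace MB

/-- Completely Ramsey. -/
def CR (X : Set SE) : Prop := ∀ (n : ℕ) (φ : SE), ∃ χ, Fix n χ ∧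
  ((∀ θ, Fix n θ → φ * χ * θ ∈ X) ∨ (∀ θ, Fix n θ → φ * χ * θ ∉ X))

theorem IsJ.agree {k N : ℕ} {ψ' χ : SE} (hJ : IsJ k N ψ') (hχ : Fix N χ) :
    Agree k (χ * ψ') ψ' := by
  obtain ⟨ρ, hρ, h⟩ := comm1 hJ hχ
  rw [h]
  intro t ht
  rw [mul_apply, hρ t ht]

theorem fix_agree {k : ℕ} (ψ : SE) {χ : SE} (hχ : Fix k χ) : Agree k (ψ * χ) ψ := by
  intro t ht
  rw [mul_apply, hχ t ht]

theorem CR_open (X : Set SE) (hX : ∀ φ ∈ X, ∃ m, ∀ φ', Agree m φ' φ → φ' ∈ X) : CR X := by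
  intro n φ
  obtain ⟨χ0, hχ0, hB⟩ := fusion (fun N φ => ∀ x : ℕ × SE, IsJ x.1 N x.2 →
      ((∀ θ, Fix N θ → φ * θ * x.2 ∈ X) ∨
        (∀ χ, Fix N χ → ∃ θ, Fix N θ ∧ φ * χ * θ * x.2 ∉ X)))
    (by
      intro N φ χ h hχ x hx
      rcases h x hx with h | h
      · left
        intro θ hθ
        simpa only [mul_assoc] using h (χ * θ) (hχ.mul hθ)
      · right
        intro χ' hχ'
        simpa only [mul_assoc] using h (χ * χ') (hχ.mul hχ')) n φ
    (by
      intro N ψ hN hψ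
      refine finite_dense N (fun x φ => ((∀ θ, Fix N θ → φ * θ * x.2 ∈ X) ∨
        (∀ χ, Fix N χ → ∃ θ, Fix N θ ∧ φ * χ * θ * x.2 ∉ X))) ?_ _ (finite_J N) (φ * ψ) ?_
      · intro x φ χ h hχ
        rcases h with h | h
        · left
          intro θ hθ
          simpa only [mul_assoc] using h (χ * θ) (hχ.mul hθ)
        · right
          intro χ' hχ'
          simpa only [mul_assoc] using h (χ * χ') (hχ.mul hχ')
      · intro x hx χ hχ
        by_cases h : ∃ χ', Fix N χ' ∧ ∀ θ, Fix N θ → φ * ψ * χ * χ' * θ * x.2 ∈ X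
        · obtain ⟨χ', h1, h2⟩ := h
          exact ⟨χ', h1, Or.inl h2⟩
        · push Not at h
          exact ⟨1, Fix.one _, Or.inr (by simpa only [mul_one] using h)⟩)
  set B := φ * χ0 with hBdef
  let acc : SE → ℕ → Prop := fun ψ k => ∀ ψ2, Agree k ψ2 ψ → B * ψ2 ∈ X
  let rej : SE → ℕ → Prop := fun ψ k => ∀ ψ2, Agree k ψ2 ψ → ∃ ρ, Fix k ρ ∧ B * ψ2 * ρ ∉ X
  have dich : ∀ ψ k, n ≤ k → acc ψ k ∨ rej ψ k := by
    intro ψ k hk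
    obtain ⟨N, hkN, ψ', hJ, hag, hall⟩ := exists_tight ψ k
    rcases hB N (hk.trans hkN) (k, ψ') hJ with h | h
    · left
      intro ψ2 h2
      obtain ⟨θ, hθ, rfl⟩ := hall ψ2 h2
      exact h θ hθ
    · right
      intro ψ2 h2
      obtain ⟨χ, hχ, rfl⟩ := hall ψ2 h2
      obtain ⟨θ, hθ, h3⟩ := h χ hχ
      obtain ⟨ρ, hρ, h4⟩ := comm1 hJ hθ
      refine ⟨ρ, hρ, ?_⟩
      have h5 : B * (χ * ψ') * ρ = B * χ * θ * ψ' := by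
        simp only [mul_assoc, h4]
      rw [h5]
      exact h3
  have contra : ∀ ψ k, acc ψ k → rej ψ k → False := by
    intro ψ k ha hr
    obtain ⟨ρ, hρ, h⟩ := hr ψ (fun _ _ => rfl)
    exact h (ha _ (fix_agree ψ hρ))
  have rej_congr : ∀ ψ ψ' k, Agree k ψ ψ' → rej ψ k → rej ψ' k := by
    intro ψ ψ' k h hr ψ2 h2
    exact hr ψ2 (h2.trans h.symm)
  rcases dich 1 n le_rfl with h1 | h1
  · refine ⟨χ0, hχ0, Or.inl ?_⟩
    intro θ hθ
    exact h1 θ hθ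
  obtain ⟨C, hC, hCP⟩ := fusion (fun N C => ∀ x : ℕ × SE, IsJ x.1 N x.2 → n ≤ x.1 →
      rej (C * x.2) x.1 → ∀ χ', Fix N χ' → ¬ acc (C * χ' * x.2) (x.1 + 1))
    (by
      intro N C χ h hχ x hx hn hr χ' hχ'
      have := h x hx hn (rej_congr _ _ _ (by
        rw [mul_assoc]; exact (hx.agree hχ).mul_left C) hr) (χ * χ') (hχ.mul hχ')
      simpa only [mul_assoc] using this) n 1
    (by
      intro N ψ hN hψ
      refine (finite_dense N (fun x C => n ≤ x.1 → IsJ x.1 N x.2 →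
        rej (C * x.2) x.1 → ∀ χ', Fix N χ' → ¬ acc (C * χ' * x.2) (x.1 + 1)) ?_ _
          (finite_J N) (1 * ψ) ?_).imp ?_
      · intro x C χ h hχ hn hx hr χ' hχ'
        have := h hn hx (rej_congr _ _ _ (by
          rw [mul_assoc]; exact (hx.agree hχ).mul_left C) hr) (χ * χ') (hχ.mul hχ')
        simpa only [mul_assoc] using this
      · rintro ⟨k, ψ'⟩ hx χ hχ
        replace hx : IsJ k N ψ' := hx
        generalize hC' : 1 * ψ * χ = C'
        by_cases hr : rej (C' * ψ') k
        · obtain ⟨ρ, hρ, h⟩ := PH0 N (fun ρ => acc (C' * ρ * ψ') (k + 1)) (by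
            intro ρ1 ρ2 hag
            have h : Agree (k+1) (C' * ρ1 * ψ') (C' * ρ2 * ψ') := by
              intro t ht
              simp only [mul_apply]
              rw [hag]
              rcases Nat.lt_succ_iff_lt_or_eq.1 ht with ht | ht
              · exact (hx.1 t ht).trans (Nat.lt_succ_self _)
              · rw [hx.2.1 t ht]; exact Nat.lt_succ_self _
            constructor
            · intro ha ψ2 h2
              exact ha ψ2 (h2.trans h.symm)
            · intro ha ψ2 h2
              exact ha ψ2 (h2.trans h))
          rcases h with h | h
          · exfalso
            obtain ⟨σ, hσ, h3⟩ := hr (C' * (ρ * ψ')) ((hx.agree hρ).mul_left C')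
            obtain ⟨θ, hθ, h4⟩ := comm2 hx hσ
            apply h3
            have := h θ hθ _ (fun _ _ => rfl)
            simpa only [mul_assoc, h4] using this
          · refine ⟨ρ, hρ, ?_⟩
            intro _ _ _ χ' hχ'
            simpa only [mul_assoc] using h χ' hχ'
        · refine ⟨1, Fix.one _, ?_⟩
          intro _ _ h
          exact absurd (by simpa using h) hr
      · rintro χ ⟨h1, h2⟩
        exact ⟨h1, fun x hx hn => h2 x hx hn hx⟩)
  rw [one_mul] at hCP
  have claim : ∀ k, n ≤ k → ∀ ψ, Fix n ψ → rej (C * ψ) k := by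
    intro k hk
    induction k, hk using Nat.le_induction with
    | base =>
      intro ψ hψ
      exact rej_congr 1 _ _ (Agree.symm (hC.mul hψ)) h1
    | succ k hk ih =>
      intro ψ hψ
      obtain ⟨N, hkN, ψ', hJ, hag, hall⟩ := exists_tight ψ k
      obtain ⟨θ, hθ, h⟩ := hall ψ (fun _ _ => rfl)
      have h3 := hCP N (hk.trans hkN) (k, ψ') hJ hk
        (rej_congr _ _ _ (hag.mul_left C) (ih ψ hψ)) θ hθ
      rw [mul_assoc, ← h] at h3
      exact (dich (C * ψ) (k+1) (by omega)).resolve_left h3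
  refine ⟨χ0 * C, hχ0.mul hC, Or.inr ?_⟩
  intro θ hθ hmem
  obtain ⟨m, hm⟩ := hX _ hmem
  refine contra (C * θ) (max m n) ?_ (claim _ (le_max_right _ _) θ hθ)
  intro ψ2 h2
  apply hm
  intro t ht
  have := h2.mul_left B t (lt_of_lt_of_le ht (le_max_left _ _))
  simpa [hBdef] using this

def CR' (X : Set SE) : Prop := ∀ ψ : SE, CR {φ | φ * ψ ∈ X}

theorem CR_iUnion (X : ℕ → Set SE) (hX : ∀ i, CR' (X i)) : CR (⋃ i, X i) := by
  intro n φ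
  obtain ⟨χ0, hχ0, hB⟩ := fusion (fun N φ => ∀ y : ℕ × (ℕ × SE), y.1 ≤ N → IsJ y.2.1 N y.2.2 →
      ((∀ θ, Fix N θ → φ * θ * y.2.2 ∈ X y.1) ∨ (∀ θ, Fix N θ → φ * θ * y.2.2 ∉ X y.1)))
    (by
      intro N φ χ h hχ y hy1 hy2
      refine (h y hy1 hy2).imp (fun h => ?_) (fun h => ?_)
      · intro θ hθ
        simpa only [mul_assoc] using h (χ * θ) (hχ.mul hθ)
      · intro θ hθ
        simpa only [mul_assoc] using h (χ * θ) (hχ.mul hθ)) n φ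
    (by
      intro N ψ hN hψ
      refine (finite_dense N (fun y φ => ((∀ θ, Fix N θ → φ * θ * y.2.2 ∈ X y.1) ∨
        (∀ θ, Fix N θ → φ * θ * y.2.2 ∉ X y.1))) ?_ _
          ((Set.finite_Iic N).prod (finite_J N)) (φ * ψ) ?_).imp ?_
      · intro y φ χ h hχ
        refine h.imp (fun h => ?_) (fun h => ?_)
        · intro θ hθ
          simpa only [mul_assoc] using h (χ * θ) (hχ.mul hθ)
        · intro θ hθ
          simpa only [mul_assoc] using h (χ * θ) (hχ.mul hθ)
      · intro y hy χ hχ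
        exact hX y.1 y.2.2 N (φ * ψ * χ)
      · rintro χ ⟨h1, h2⟩
        exact ⟨h1, fun y hy1 hy2 => h2 y ⟨hy1, hy2⟩⟩)
  obtain ⟨χ, hχ, h⟩ := CR_open {ψ | ∃ m, ∀ ψ2, Agree m ψ2 ψ → φ * χ0 * ψ2 ∈ ⋃ i, X i} (by
    rintro ψ ⟨m, hm⟩
    exact ⟨m, fun φ' hφ' => ⟨m, fun ψ2 h2 => hm ψ2 (h2.trans hφ')⟩⟩) n 1
  refine ⟨χ0 * χ, hχ0.mul hχ, h.imp (fun h => ?_) (fun h => ?_)⟩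
  · intro θ hθ
    obtain ⟨m, hm⟩ := h θ hθ
    simpa only [one_mul, mul_assoc] using hm _ (fun _ _ => rfl)
  · intro θ hθ hmem
    obtain ⟨i, hi⟩ := Set.mem_iUnion.1 hmem
    apply h θ hθ
    rw [one_mul]
    obtain ⟨N, hkN, ψ', hJ, hag, hall⟩ := exists_tight (χ * θ) (max n i)
    refine ⟨max n i, fun ψ2 h2 => Set.mem_iUnion.2 ⟨i, ?_⟩⟩
    obtain ⟨θ', hθ', h3⟩ := hall _ (fun _ _ => rfl)
    obtain ⟨θ2, hθ2, rfl⟩ := hall _ h2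
    have hid : φ * (χ0 * χ) * θ = φ * χ0 * θ' * ψ' := by
      rw [mul_assoc _ θ' ψ', ← h3]; simp only [mul_assoc]
    rcases hB N ((le_max_left _ _).trans hkN) (i, (max n i, ψ'))
      ((le_max_right _ _).trans hkN) hJ with h4 | h4
    · rw [← mul_assoc]; exact h4 θ2 hθ2
    · exact absurd (hid ▸ hi) (h4 θ' hθ')

theorem CR'_open (X : Set SE) (hX : ∀ φ ∈ X, ∃ m, ∀ φ', Agree m φ' φ → φ' ∈ X) : CR' X := by
  intro ψ
  apply CR_open
  intro φ hφ
  obtain ⟨m, hm⟩ := hX _ hφ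
  refine ⟨(ψ (List.replicate m false)).length, fun φ' h => hm _ ?_⟩
  intro t ht
  simp only [mul_apply]
  exact h _ (ψ.len_lt (by simpa using ht))

/-- The `σ`-algebra of translation-invariantly completely Ramsey sets. -/
@[reducible] def crSpace : MeasurableSpace SE where
  MeasurableSet' := CR'
  measurableSet_empty := by
    intro ψ n φ
    exact ⟨1, Fix.one _, Or.inr (fun θ _ h => h)⟩
  measurableSet_compl X hX := by
    intro ψ n φ
    obtain ⟨χ, hχ, h⟩ := hX ψ n φ
    refine ⟨χ, hχ, h.symm.imp (fun h θ hθ => h θ hθ) (fun h θ hθ hn => hn (h θ hθ))⟩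
  measurableSet_iUnion X hX := by
    intro ψ
    have := CR_iUnion (fun i => {φ | φ * ψ ∈ X i}) (fun i ψ' => by
      have := hX i (ψ' * ψ)
      simp only [← mul_assoc] at this
      exact this)
    convert this using 1
    ext φ
    simp

end MB

namespace MB

theorem SE.ext_reflect (φ : SE) {a b : List Bool} {i : Bool} (h : φ a ++ [i] <+: φ b) :
    a ++ [i] <+: b := by
  have hlt : a.length < b.length := by
    by_contra hc
    have h1 := φ.len_le (not_lt.1 hc)
    have h2 := h.length_le
    simp at h2
    omega
  obtain ⟨u, j, r, rfl, hu⟩ : ∃ u j r, b = u ++ j :: r ∧ u.length = a.length := by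
    refine ⟨b.take a.length, b[a.length], b.drop (a.length + 1), ?_, by simp; omega⟩
    simp
  have h1 := φ.ext_cons u r j
  have h2 : φ a ++ [i] = φ u ++ [j] :=
    (List.prefix_of_prefix_length_le h h1 (by simp [φ.len _ _ hu])).eq_of_length
      (by simp [φ.len _ _ hu])
  obtain ⟨h3, h4⟩ := List.append_inj' h2 rfl
  have h5 := φ.inj h3
  simp at h4
  subst h5 h4
  exact ⟨r, by simp⟩

theorem SE.length_eq (φ : SE) (t : List Bool) :
    (φ t).length = (φ (List.replicate t.length false)).length := φ.len _ _ (by simp)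

theorem SE.kmono (φ : SE) : StrictMono (fun ℓ => (φ (List.replicate ℓ false)).length) :=
  fun a b h => φ.len_lt (by simpa using h)

theorem isStrong (φ : SE) : IsStrongSubtree (Set.range φ) := by
  refine ⟨fun ℓ => (φ (List.replicate ℓ false)).length, φ.kmono, ?_, ?_, ?_, ?_⟩
  · rintro _ ⟨t, rfl⟩
    exact ⟨t.length, φ.length_eq t⟩
  · refine ⟨φ [], ⟨⟨[], rfl⟩, rfl⟩, ?_⟩
    rintro _ ⟨⟨t, rfl⟩, ht⟩
    have := φ.len_eq_iff.1 ht
    simp at this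
    rw [this]
  · rintro ℓ _ ⟨t, rfl⟩ ht i
    have htl := φ.len_eq_iff.1 ht
    simp at htl
    refine ⟨φ (t ++ [i]), ⟨⟨_, rfl⟩, φ.len _ _ (by simp [htl]), φ.ext' t i⟩, ?_⟩
    rintro _ ⟨⟨u, rfl⟩, hu, hp⟩
    have hul := φ.len_eq_iff.1 hu
    simp at hul
    rw [(φ.ext_reflect hp).eq_of_length (by simp [hul, htl])]
  · rintro ℓ _ ⟨u, rfl⟩ hu
    have hul := φ.len_eq_iff.1 hu
    rcases List.eq_nil_or_concat u with rfl | ⟨t, i, rfl⟩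
    · simp at hul
    · rw [List.concat_eq_append] at *
      refine ⟨φ t, ⟨t, rfl⟩, φ.len _ _ (by simpa using hul), i, φ.ext' t i⟩

theorem exists_SE {A : Set (List Bool)} (hA : IsStrongSubtree A) : ∃ φ : SE, Set.range φ = A := by
  obtain ⟨k, hk, hl, ⟨a0, ⟨ha0, ha0l⟩, hu0⟩, hs, hp⟩ := hA
  have next : ∀ (a : A) (i : Bool), ∃ b : A, ∀ ℓ, a.1.length = k ℓ →
      b.1.length = k (ℓ + 1) ∧ a.1 ++ [i] <+: b.1 := by
    rintro ⟨a, ha⟩ i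
    obtain ⟨ℓ, hℓ⟩ := hl a ha
    obtain ⟨b, ⟨hb, hbl, hbp⟩, -⟩ := hs ℓ a ha hℓ i
    refine ⟨⟨b, hb⟩, fun ℓ' hℓ' => ?_⟩
    have : ℓ' = ℓ := hk.injective (hℓ'.symm.trans hℓ)
    subst this
    exact ⟨hbl, hbp⟩
  choose nx hnx using next
  let g : List Bool → A := fun t => t.foldl nx ⟨a0, ha0⟩
  have hg : ∀ t i, g (t ++ [i]) = nx (g t) i := by intro t i; simp [g]
  have hgl : ∀ t, (g t).1.length = k t.length := by
    intro t
    induction t using List.reverseRecOn with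
    | nil => exact ha0l
    | append_singleton t i ih =>
      rw [hg, (hnx _ i _ ih).1]; simp
  let φ : SE := ⟨fun t => (g t).1, fun s t h => by rw [hgl, hgl, h], fun t i => by
    rw [hg]; exact (hnx _ i _ (hgl t)).2⟩
  refine ⟨φ, Set.Subset.antisymm ?_ ?_⟩
  · rintro _ ⟨t, rfl⟩; exact (g t).2
  · have : ∀ ℓ, ∀ a ∈ A, a.length = k ℓ → ∃ t : List Bool, t.length = ℓ ∧ φ t = a := by
      intro ℓ
      induction ℓ with
      | zero =>
        intro a ha hal
        exact ⟨[], rfl, (hu0 a ⟨ha, hal⟩).symm⟩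
      | succ ℓ ih =>
        intro b hb hbl
        obtain ⟨a, ha, hal, i, hpre⟩ := hp ℓ b hb hbl
        obtain ⟨t, ht, rfl⟩ := ih a ha hal
        refine ⟨t ++ [i], by simp [ht], ?_⟩
        refine (hs ℓ _ ha hal i).unique ⟨(g (t ++ [i])).2, ?_, φ.ext' t i⟩ ⟨hb, hbl, hpre⟩
        have := hgl (t ++ [i])
        simpa [ht] using this
    intro a ha
    obtain ⟨ℓ, hℓ⟩ := hl a ha
    obtain ⟨t, -, ht⟩ := this ℓ a ha hℓ
    exact ⟨t, ht⟩

theorem exists_mul {φ φ' : SE} (h : Set.range φ ⊆ Set.range φ') : ∃ ψ, φ = φ' * ψ := by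
  have : ∀ t, ∃ u, φ' u = φ t := fun t => h ⟨t, rfl⟩
  choose ψ hψ using this
  refine ⟨⟨ψ, ?_, ?_⟩, ?_⟩
  · intro s t hst
    apply φ'.len_eq_iff.1
    rw [hψ, hψ]; exact φ.len _ _ hst
  · intro t i
    apply φ'.ext_reflect
    rw [hψ, hψ]; exact φ.ext' t i
  · exact SE.ext_fun (fun t => (hψ t).symm)

theorem levelOf_range (φ : SE) (ℓ : ℕ) :
    levelOf (Set.range φ) ℓ = (φ (List.replicate ℓ false)).length := by
  unfold levelOf
  have hT : ∀ i, (∃ a ∈ Set.range φ, a.length = (φ (List.replicate i false)).length) ↔ True :=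
    fun i => iff_true_intro ⟨_, ⟨_, rfl⟩, rfl⟩
  have := Nat.nth_comp_of_strictMono (p := fun h => ∃ a ∈ Set.range φ, a.length = h) (n := ℓ)
    φ.kmono (by
      rintro k ⟨_, ⟨t, rfl⟩, rfl⟩
      exact ⟨t.length, (φ.length_eq t).symm⟩) (by
      intro hfin
      exfalso
      refine Set.infinite_range_of_injective φ.kmono.injective (hfin.subset ?_)
      rintro _ ⟨i, rfl⟩
      exact (hT i).2 trivial)
  rw [← this]
  simp only [hT]
  simp

theorem approxT_range (φ : SE) (n : ℕ) : approxT (Set.range φ) n = φ '' {t | t.length < n} := by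
  ext a
  simp only [approxT, levelOf_range]
  constructor
  · rintro ⟨⟨t, rfl⟩, ℓ, hℓ, h⟩
    have := φ.len_eq_iff.1 h
    simp at this
    exact ⟨t, by simpa [this] using hℓ, rfl⟩
  · rintro ⟨t, ht, rfl⟩
    exact ⟨⟨t, rfl⟩, t.length, ht, φ.length_eq t⟩

def toSinf (φ : SE) : Sinf := ⟨Set.range φ, isStrong φ⟩

theorem toSinf_surj (A : Sinf) : ∃ φ, toSinf φ = A := by
  obtain ⟨φ, h⟩ := exists_SE A.2
  exact ⟨φ, Subtype.ext h⟩

theorem measurable_toSinf : @Measurable _ _ crSpace _ toSinf := by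
  let _ := crSpace
  refine Measurable.subtype_mk ?_
  refine measurable_set_iff.2 (fun x => ?_)
  refine measurableSet_setOfPred.1 ?_
  change CR' _
  apply CR'_open
  rintro φ ⟨t, rfl⟩
  exact ⟨t.length + 1, fun φ' h => ⟨t, h t (Nat.lt_succ_self _)⟩⟩

theorem measurable_right (ψ : SE) : @Measurable _ _ crSpace crSpace (fun C => C * ψ) := by
  let _ := crSpace
  intro X hX
  replace hX : CR' X := hX
  change CR' _
  intro ψ'
  have := hX (ψ' * ψ)
  simp only [← mul_assoc] at this
  exact this

theorem measurableSet_eval (p x : List Bool) : @MeasurableSet _ crSpace {C : SE | C p = x} := by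
  change CR' _
  apply CR'_open
  rintro φ rfl
  exact ⟨p.length + 1, fun φ' h => h p (Nat.lt_succ_self _)⟩

theorem exists_long {g ψ : SE} (h : ¬ Set.range g ⊆ Set.range ψ) (m : ℕ) :
    ∃ t : List Bool, m ≤ t.length ∧ g t ∉ Set.range ψ := by
  induction m with
  | zero =>
    obtain ⟨_, ⟨t, rfl⟩, ht⟩ := Set.not_subset.1 h
    exact ⟨t, Nat.zero_le _, ht⟩
  | succ m ih =>
    obtain ⟨t, ht, hn⟩ := ih
    by_contra hc
    push Not at hc
    obtain ⟨a, ha⟩ := hc (t ++ [false]) (by simpa using ht)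
    obtain ⟨b, hb⟩ := hc (t ++ [true]) (by simpa using ht)
    obtain ⟨c, hc⟩ := ψ.meet (w := g t) (i := false) (a := a) (b := b)
      (by rw [ha]; exact g.ext' t false) (by rw [hb]; exact g.ext' t true)
    exact hn ⟨c, hc⟩

theorem core (f : Sinf → Sinf) (hf : Measurable f) (n : ℕ) (φ : SE) :
    ∃ χ, Fix n χ ∧ ∀ A : Sinf, A.1 ⊆ Set.range (φ * χ) → (f A).1 ⊆ Set.range (φ * χ) →
      (f A).1 ⊆ A.1 := by
  let F : SE → Sinf := fun ψ => f (toSinf ψ)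
  have hF : @Measurable _ _ crSpace _ F := by
    let _ := crSpace
    exact hf.comp measurable_toSinf
  let H := (φ (List.replicate n false)).length
  let G : SE → List Bool → Prop := fun ψ x => x ∈ (F ψ).1 ∧ x ∉ Set.range ψ ∧ H ≤ x.length
  let Bad : SE → List Bool → Prop := fun ψ x => G ψ x ∧
    ∀ y, Encodable.encode y < Encodable.encode x → ¬ G ψ y
  have uniq : ∀ ψ x y, Bad ψ x → Bad ψ y → x = y := by
    intro ψ x y hx hy
    rcases lt_trichotomy (Encodable.encode x) (Encodable.encode y) with h | h | h
    · exact absurd hx.1 (hy.2 x h)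
    · exact Encodable.encode_injective h
    · exact absurd hy.1 (hx.2 y h)
  have hmG : ∀ x, @MeasurableSet _ crSpace {ψ | G ψ x} := by
    intro x
    let _ := crSpace
    have h1 : MeasurableSet {ψ | x ∈ (F ψ).1} :=
      measurableSet_setOfPred.2 ((measurable_set_mem x).comp (measurable_subtype_coe.comp hF))
    have h2 : MeasurableSet {ψ | x ∈ (toSinf ψ).1} :=
      measurableSet_setOfPred.2
        ((measurable_set_mem x).comp (measurable_subtype_coe.comp measurable_toSinf))
    exact h1.inter (h2.compl.inter (MeasurableSet.const _))
  have hmBad : ∀ x, @MeasurableSet _ crSpace {ψ | Bad ψ x} := by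
    intro x
    let _ := crSpace
    have : {ψ | Bad ψ x} = {ψ | G ψ x} ∩
        ⋂ y : List Bool, ⋂ _ : Encodable.encode y < Encodable.encode x, {ψ | G ψ y}ᶜ := by
      ext ψ
      simp [Bad]
    rw [this]
    exact (hmG x).inter (MeasurableSet.iInter fun y => MeasurableSet.iInter fun _ => (hmG y).compl)
  have hmZ : ∀ (ψ' : SE) (p : List Bool), CR' {C : SE | Bad (C * ψ') (C p)} := by
    intro ψ' p
    let _ := crSpace
    have : {C : SE | Bad (C * ψ') (C p)} =
        ⋃ x : List Bool, {C : SE | C p = x} ∩ {C | Bad (C * ψ') x} := by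
      ext C
      simp
    change MeasurableSet {C : SE | Bad (C * ψ') (C p)}
    rw [this]
    exact MeasurableSet.iUnion fun x =>
      (measurableSet_eval p x).inter (measurable_right ψ' (hmBad x))
  have exBad : ∀ ψ, ¬ (F ψ).1 ⊆ Set.range ψ → ∃ x, Bad ψ x := by
    intro ψ h
    obtain ⟨g, hg⟩ := exists_SE (F ψ).2
    rw [← hg] at h
    obtain ⟨t, ht, hn⟩ := exists_long h H
    have hex : ∃ m x, G ψ x ∧ Encodable.encode x = m :=
      ⟨_, g t, ⟨hg ▸ ⟨t, rfl⟩, hn, ht.trans (g.le_len t)⟩, rfl⟩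
    classical
    obtain ⟨x, hx, hxm⟩ := Nat.find_spec hex
    refine ⟨x, hx, fun y hy hGy => ?_⟩
    exact Nat.find_min hex (hxm ▸ hy) ⟨y, hGy, rfl⟩
  obtain ⟨χ, hχ, hP⟩ := fusion (fun N C => ∀ y : (ℕ × SE) × List Bool, IsJ y.1.1 (N + 1) y.1.2 →
      y.2.length = N → (∀ t, y.1.2 t ≠ y.2) → ∀ χ, Fix N χ →
        ¬ Bad (C * χ * y.1.2) ((C * χ) y.2))
    (by
      intro N C χ h hχ y h1 h2 h3 χ' hχ'
      have := h y h1 h2 h3 (χ * χ') (hχ.mul hχ')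
      simpa only [mul_assoc] using this) n φ
    (by
      intro N ψ hN hψ
      refine (finite_dense N (fun y C => (∀ t, y.1.2 t ≠ y.2) → ∀ χ, Fix N χ →
        ¬ Bad (C * χ * y.1.2) ((C * χ) y.2)) ?_ _
          ((finite_J (N + 1)).prod (List.finite_length_eq Bool N)) (φ * ψ) ?_).imp ?_
      · intro y C χ h hχ h3 χ' hχ'
        have := h h3 (χ * χ') (hχ.mul hχ')
        simpa only [mul_assoc] using this
      · rintro ⟨⟨k, ψ'⟩, p⟩ ⟨hJ, hp⟩ χ hχ
        replace hp : p.length = N := hp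
        obtain ⟨χ', hχ', h⟩ := hmZ ψ' p 1 N (φ * ψ * χ)
        simp only [mul_one] at h
        by_cases hr : ∀ t, ψ' t ≠ p
        · rcases h with h | h
          · exfalso
            obtain ⟨θ₁, θ₂, h1, h2, h3, h4⟩ := exists_move ψ' p hr
            rw [hp] at h1 h2
            have b1 : Bad _ _ := h θ₁ h1
            have b2 : Bad _ _ := h θ₂ h2
            rw [mul_assoc _ θ₁ ψ', h3, ← mul_assoc] at b1
            have := uniq _ _ _ b1 b2
            exact h4 ((φ * ψ * χ * χ').inj this)
          · exact ⟨χ', hχ', fun _ θ hθ => h θ hθ⟩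
        · exact ⟨1, Fix.one _, fun h => absurd h hr⟩
      · rintro χ ⟨h1, h2⟩
        exact ⟨h1, fun y hy1 hy2 => h2 y ⟨hy1, hy2⟩⟩)
  refine ⟨χ, hχ, ?_⟩
  intro A hA hfA
  by_contra hn
  obtain ⟨α, rfl⟩ := toSinf_surj A
  obtain ⟨ψ, rfl⟩ := exists_mul hA
  obtain ⟨x, hx⟩ := exBad _ hn
  obtain ⟨p, rfl⟩ := hfA hx.1.1
  have hpn : n ≤ p.length := by
    by_contra hc
    have h1 : H ≤ _ := hx.1.2.2
    rw [mul_apply, hχ p (by omega)] at h1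
    have := φ.len_lt (s := p) (t := List.replicate n false) (by simp; omega)
    simp only [H] at h1
    omega
  obtain ⟨k, ψ', θ, hJ, hθ, rfl⟩ := exists_factor ψ (p.length + 1)
  have hθp : θ p = p := hθ p (Nat.lt_succ_self _)
  refine hP p.length hpn ((k, ψ'), p) hJ rfl ?_ θ (hθ.mono (Nat.le_succ _)) ?_
  · intro t ht
    apply hx.1.2.1
    replace ht : ψ' t = p := ht
    exact ⟨t, by simp [ht, hθp]⟩
  · have : (φ * χ * θ) p = (φ * χ) p := by simp [hθp]
    simp only [this]
    rw [mul_assoc _ θ ψ']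
    exact hx

end MB
open MB
theorem milliken_borel_map_lemma (f : Sinf → Sinf) (hf : Measurable f) :
    ∃ D : Set Sinf, RamseyConullT D ∧
      ∀ B ∈ D, ∀ A : Sinf, A.1 ⊆ B.1 → (f A).1 ⊆ B.1 → (f A).1 ⊆ A.1 := by
  refine ⟨{B | ∀ A : Sinf, A.1 ⊆ B.1 → (f A).1 ⊆ B.1 → (f A).1 ⊆ A.1}, ?_, fun B hB => hB⟩
  rintro s A0 ⟨C, ⟨n, hs⟩, hCA⟩
  obtain ⟨φ, rfl⟩ := toSinf_surj C
  obtain ⟨χ, hχ, h⟩ := core f hf n φ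
  refine ⟨toSinf (φ * χ), ⟨⟨n, ?_⟩, ?_⟩, ?_⟩
  · rw [hs]
    change approxT (Set.range φ) n = approxT (Set.range (φ * χ)) n
    rw [approxT_range, approxT_range]
    apply Set.image_congr
    intro t ht
    rw [mul_apply, hχ t ht]
  · refine Set.Subset.trans ?_ hCA
    rintro _ ⟨t, rfl⟩
    exact ⟨χ t, rfl⟩
  · rw [Set.eq_empty_iff_forall_notMem]
    rintro B ⟨⟨-, hB⟩, hn⟩
    apply hn
    intro A hA hfA
    exact h A (hA.trans hB) (hfA.trans hB)
end

section
/- Let f : S_∞(2^{<ℕ}) → S_∞(2^{<ℕ}) be a Borel map and let [s, D] be a nonempty Ellentuck cube in S_∞(2^{<ℕ}). Then there exist B₀ ∈ [s, D] and n₀ ∈ ℕ such that for all n ≥ n₀ and all A, A' ∈ S_∞(2^{<ℕ}) with A ≤ B₀ and A' ≤ B₀ satisfying A ∩ B₀(n−1) = A' ∩ B₀(n−1) ≠ ∅, one has ⟨f(A)⟩ ∩ B₀(n−1) = ⟨f(A')⟩ ∩ B₀(n−1). -/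
/-- The `ℓ`-th level set `A(ℓ)` of `A ⊆ 2^{<ℕ}`: members of `A` of the `ℓ`-th height. -/
noncomputable def lvlSet (A : Set (List Bool)) (ℓ : ℕ) : Set (List Bool) :=
  {a ∈ A | a.length = levelOf A ℓ}

/-- `⟨A⟩`: all `b ∈ 2^{<ℕ}` extended by some member of `A`. -/
def below (A : Set (List Bool)) : Set (List Bool) := {b | ∃ a ∈ A, b <+: a}

/-! ### Part 1: abstract Ellentuck theory -/

/-- Abstract Ramsey monoid. -/
structure RamseyMonoid (M : Type) [Monoid M] where
  F : ℕ → Submonoid M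
  T : ℕ → ℕ → Set M
  anti : Antitone F
  fin : ∀ k m, (T k m).Finite
  push : ∀ {k m : ℕ} {h g : M}, h ∈ T k m → g ∈ F m → ∃ g' ∈ F k, g * h = h * g'
  lift : ∀ {k m : ℕ} {h g : M}, h ∈ T k m → g ∈ F k → ∃ g' ∈ F m, g' * h = h * g
  fac : ∀ (g : M) (k : ℕ), ∃ m, k ≤ m ∧ ∃ h ∈ T k m, ∃ g' ∈ F k, g = h * g'
  iprod : ∀ g : ℕ → M, (∀ m, g m ∈ F m) →
    ∃ G : ℕ → M, (∀ m, G m ∈ F m) ∧ ∀ m, G m = g m * G (m + 1)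
  ph : ∀ (k : ℕ) (O : Set M), (∀ g ∈ F k, ∀ g' ∈ F (k + 1), (g ∈ O ↔ g * g' ∈ O)) →
    ∃ g ∈ F k, (∀ g' ∈ F k, g * g' ∈ O) ∨ (∀ g' ∈ F k, g * g' ∉ O)

namespace RamseyMonoid

variable {M : Type} [Monoid M] (R : RamseyMonoid M)

def Dec (X : Set M) (k : ℕ) (x : M) : Prop :=
  (∀ g ∈ R.F k, x * g ∈ X) ∨ (∀ g ∈ R.F k, x * g ∉ X)

def CR (X : Set M) : Prop := ∀ n e, ∃ g ∈ R.F n, R.Dec X n (e * g)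

structure DH (k : ℕ) (Q : M → Prop) : Prop where
  dense : ∀ e, ∃ g ∈ R.F k, Q (e * g)
  her : ∀ e, Q e → ∀ g ∈ R.F k, Q (e * g)

variable {R}

theorem Dec.her {X : Set M} {k : ℕ} {x : M} (h : R.Dec X k x) {g : M} (hg : g ∈ R.F k) :
    R.Dec X k (x * g) := by
  rcases h with h | h
  · left; intro g' hg'; rw [mul_assoc]; exact h _ (mul_mem hg hg')
  · right; intro g' hg'; rw [mul_assoc]; exact h _ (mul_mem hg hg')

theorem CR.dh {X : Set M} (h : R.CR X) (k : ℕ) : R.DH k (R.Dec X k) :=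
  ⟨h k, fun _ he _ hg => he.her hg⟩

theorem DH.comp {k m : ℕ} {Q : M → Prop} (hQ : R.DH k Q) {h : M} (hh : h ∈ R.T k m) :
    R.DH m (fun x => Q (x * h)) := by
  constructor
  · intro e
    obtain ⟨g, hg, hq⟩ := hQ.dense (e * h)
    obtain ⟨g', hg', e'⟩ := R.lift hh hg
    refine ⟨g', hg', ?_⟩
    rwa [mul_assoc, e', ← mul_assoc]
  · intro e he g hg
    obtain ⟨g', hg', e'⟩ := R.push hh hg
    show Q _
    rw [mul_assoc, e', ← mul_assoc]
    exact hQ.her _ he _ hg'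

theorem DH.all {ι : Type} {S : Set ι} (hS : S.Finite) {m : ℕ} {Q : ι → M → Prop}
    (hQ : ∀ i ∈ S, R.DH m (Q i)) : R.DH m (fun x => ∀ i ∈ S, Q i x) := by
  refine ⟨?_, fun e he g hg i hi => (hQ i hi).her e (he i hi) g hg⟩
  induction S, hS using Set.Finite.induction_on with
  | empty => intro e; exact ⟨1, one_mem _, by simp⟩
  | @insert a s ha hs ih =>
    intro e
    obtain ⟨g, hg, h1⟩ := ih (fun i hi => hQ i (Set.mem_insert_of_mem _ hi)) e
    obtain ⟨g', hg', h2⟩ := (hQ a (Set.mem_insert _ _)).dense (e * g)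
    refine ⟨g * g', mul_mem hg hg', ?_⟩
    rw [← mul_assoc]
    intro i hi
    rcases hi with rfl | hi
    · exact h2
    · exact (hQ i (Set.mem_insert_of_mem _ hi)).her _ (h1 i hi) _ hg'

/-- All `h ∈ T k m`, `k ≤ m`. -/
theorem DH.allT {m : ℕ} {Q : ℕ → M → Prop} (hQ : ∀ k ≤ m, R.DH k (Q k)) :
    R.DH m (fun x => ∀ k ∈ Set.Iic m, ∀ h ∈ R.T k m, Q k (x * h)) := by
  refine DH.all (Q := fun k x => ∀ h ∈ R.T k m, Q k (x * h)) (Set.finite_Iic m) ?_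
  intro k hk
  exact DH.all (Q := fun h x => Q k (x * h)) (R.fin k m) (fun h hh => (hQ k hk).comp hh)

theorem fusion (P : ℕ → M → Prop) (hP : ∀ m, R.DH m (P m)) (e : M) (n : ℕ) :
    ∃ g ∈ R.F n, ∀ m ≥ n, P m (e * g) := by
  choose pick hpick hpick2 using fun m => (hP m).dense
  let E : ℕ → M := fun j => Nat.rec e (fun m x => x * (if m < n then 1 else pick m x)) j
  have hE : ∀ m, E (m + 1) = E m * (if m < n then 1 else pick m (E m)) := fun m => rfl
  obtain ⟨G, hG, hG2⟩ := R.iprod (fun m => if m < n then 1 else pick m (E m)) (by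
    intro m
    split_ifs
    · exact one_mem _
    · exact hpick _ _)
  have h1 : ∀ m ≤ n, E m = e := by
    intro m
    induction m with
    | zero => intro _; rfl
    | succ m ih =>
      intro hm
      rw [hE, if_pos (by omega), mul_one]
      exact ih (by omega)
  have h2 : ∀ m, n ≤ m → E m * G m = e * G n := by
    intro m hm
    induction m, hm using Nat.le_induction with
    | base => rw [h1 n le_rfl]
    | succ m hm ih => rw [← ih, hE, hG2 m, mul_assoc]
  refine ⟨G n, hG n, fun m hm => ?_⟩
  rw [← h2 (m + 1) (by omega)]
  refine (hP m).her _ ?_ _ (R.anti (Nat.le_succ m) (hG (m + 1)))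
  rw [hE, if_neg (by omega)]
  exact hpick2 _ _

theorem fusionT (Q : ℕ → ℕ → M → Prop) (hQ : ∀ m, ∀ k ≤ m, R.DH k (Q m k)) (e : M) (n : ℕ) :
    ∃ g ∈ R.F n, ∀ m ≥ n, ∀ k ≤ m, ∀ h ∈ R.T k m, Q m k (e * g * h) := by
  obtain ⟨g, hg, h⟩ := fusion (R := R) _ (fun m => DH.allT (hQ m)) e n
  exact ⟨g, hg, fun m hm k hk => h m hm k hk⟩

theorem CR.compl {X : Set M} (h : R.CR X) : R.CR Xᶜ := by
  intro n e
  obtain ⟨g, hg, hd⟩ := h n e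
  refine ⟨g, hg, ?_⟩
  rcases hd with hd | hd
  · right; intro g' hg' hc; exact hc (hd g' hg')
  · left; exact hd

/-- Ellentuck-open sets are completely Ramsey. -/
theorem open_CR (X : Set M) (hX : ∀ x ∈ X, ∃ k, ∀ g ∈ R.F k, x * g ∈ X) : R.CR X := by
  intro n e
  let acc : ℕ → M → Prop := fun k x => ∀ g ∈ R.F k, x * g ∈ X
  let rej : ℕ → M → Prop := fun k x => ∀ g ∈ R.F k, ¬ acc k (x * g)
  have acc_her : ∀ k x, acc k x → ∀ g ∈ R.F k, acc k (x * g) := by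
    intro k x h g hg g' hg'
    rw [mul_assoc]; exact h _ (mul_mem hg hg')
  have rej_her : ∀ k x, rej k x → ∀ g ∈ R.F k, rej k (x * g) := by
    intro k x h g hg g' hg'
    rw [mul_assoc]; exact h _ (mul_mem hg hg')
  have rej_not : ∀ k x, rej k x → ¬ acc k x := by
    intro k x h h'
    exact h 1 (one_mem _) (by rwa [mul_one])
  obtain ⟨g1, hg1, h1⟩ := fusionT (R := R) (fun _ k x => acc k x ∨ rej k x) (by
    intro m k _
    constructor
    · intro x
      by_cases hx : rej k x
      · exact ⟨1, one_mem _, by rw [mul_one]; exact Or.inr hx⟩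
      · simp only [rej, not_forall, not_not] at hx
        obtain ⟨g, hg, h⟩ := hx
        exact ⟨g, hg, Or.inl h⟩
    · intro x hx g hg
      exact hx.imp (fun h => acc_her _ _ h _ hg) (fun h => rej_her _ _ h _ hg)) e n
  have dec : ∀ k ≥ n, ∀ x, acc k (e * g1 * x) ∨ rej k (e * g1 * x) := by
    intro k hk x
    obtain ⟨m, hm, h, hh, g', hg', rfl⟩ := R.fac x k
    rw [← mul_assoc]
    exact (h1 m (hk.le.trans hm) k hm h hh).imp (fun h => acc_her _ _ h _ hg')
      (fun h => rej_her _ _ h _ hg')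
  rcases dec n le_rfl 1 with h | hrej
  · rw [mul_one] at h
    exact ⟨g1, hg1, Or.inl h⟩
  rw [mul_one] at hrej
  set e1 := e * g1 with he1
  obtain ⟨g2, hg2, h2⟩ := fusionT (R := R) (fun _ k x => n ≤ k → rej k (e1 * x) →
      ∀ g ∈ R.F k, rej (k + 1) (e1 * x * g)) (by
    intro m k _
    constructor
    · intro x
      by_cases hx : n ≤ k ∧ rej k (e1 * x)
      swap
      · refine ⟨1, one_mem _, fun h h' => ?_⟩
        rw [mul_one] at h'
        exact absurd ⟨h, h'⟩ hx
      obtain ⟨hk, hx⟩ := hx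
      obtain ⟨g, hg, hgg⟩ := R.ph k {g | acc (k + 1) (e1 * x * g)} (by
        intro g hg g' hg'
        simp only [Set.mem_ofPred_eq]
        constructor
        · intro h; rw [← mul_assoc]; exact acc_her _ _ h _ hg'
        · intro h
          rcases dec (k + 1) (by omega) (x * g) with h' | h'
          · rwa [mul_assoc]
          · rw [← mul_assoc] at h'
            rw [← mul_assoc] at h
            exact absurd h (h' _ hg'))
      refine ⟨g, hg, fun _ _ g' hg' => ?_⟩
      rcases hgg with hgg | hgg
      · exfalso
        refine hx g hg ?_
        intro g'' hg''
        have := hgg g'' hg'' 1 (one_mem _)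
        rw [mul_one, ← mul_assoc] at this
        exact this
      · have h3 := hgg g' hg'
        simp only [Set.mem_ofPred_eq] at h3
        rcases dec (k + 1) (by omega) (x * g * g') with h' | h'
        · simp only [mul_assoc] at h3 h'
          exact absurd h' h3
        · simpa only [mul_assoc] using h'
    · intro x hx g hg hk hr g' hg'
      rcases dec k hk x with h | h
      · exact absurd (acc_her _ _ h _ hg) (by
          have := rej_not _ _ hr
          rwa [← mul_assoc] at this)
      · have := hx hk h (g * g') (mul_mem hg hg')
        simpa only [mul_assoc] using this) 1 n
  simp only [one_mul] at h2
  have key : ∀ k ≥ n, ∀ g ∈ R.F n, rej k (e1 * (g2 * g)) := by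
    intro k hk
    induction k, hk using Nat.le_induction with
    | base => intro g hg; exact rej_her _ _ hrej _ (mul_mem hg2 hg)
    | succ k hk ih =>
      intro g hg
      have hr := ih g hg
      obtain ⟨m, hm, h, hh, g', hg', rfl⟩ := R.fac g k
      have := h2 m (hk.trans hm) k hm h hh hk (by
        rcases dec k hk (g2 * h) with h' | h'
        · have h3 := acc_her _ _ h' _ hg'
          simp only [← mul_assoc] at h3 hr
          exact absurd h3 (rej_not _ _ hr)
        · exact h') g' hg'
      simpa only [mul_assoc] using this
  refine ⟨g1 * g2, mul_mem hg1 hg2, Or.inr ?_⟩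
  intro g hg hc
  obtain ⟨k, hk⟩ := hX _ hc
  refine rej_not _ _ (key (max k n) (le_max_right _ _) g hg) ?_
  intro g' hg'
  have := hk g' (R.anti (le_max_left _ _) hg')
  simpa only [he1, mul_assoc] using this

theorem CR.iUnion {X : ℕ → Set M} (hX : ∀ i, R.CR (X i)) : R.CR (⋃ i, X i) := by
  intro n e
  obtain ⟨g, hg, h⟩ := fusionT (R := R) (fun m k x => ∀ i ∈ Set.Iic m, R.Dec (X i) k x) (by
    intro m k _
    exact DH.all (Q := fun i x => R.Dec (X i) k x) (Set.finite_Iic m)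
      (fun i _ => (hX i).dh k)) e n
  obtain ⟨g', hg', h'⟩ := open_CR (R := R) {x | e * g * x ∈ ⋃ i, X i} (by
    intro x hx
    obtain ⟨i, hi⟩ := Set.mem_iUnion.1 hx
    refine ⟨max i n, fun g' hg' => ?_⟩
    obtain ⟨m, hm, t, ht, g0, hg0, rfl⟩ := R.fac x (max i n)
    refine Set.mem_iUnion.2 ⟨i, ?_⟩
    rcases h m (by omega) _ hm t ht i (by simp only [Set.mem_Iic]; omega) with h | h
    · have := h (g0 * g') (mul_mem hg0 hg')
      simpa only [mul_assoc] using this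
    · have := h g0 hg0
      simp only [mul_assoc] at this hi
      exact absurd hi this) n 1
  refine ⟨g * g', mul_mem hg hg', ?_⟩
  rcases h' with h' | h'
  · left; intro x hx
    have := h' x hx
    simpa only [Set.mem_ofPred_eq, mul_assoc, one_mul] using this
  · right; intro x hx
    have := h' x hx
    simpa only [Set.mem_ofPred_eq, mul_assoc, one_mul] using this

theorem CR.empty : R.CR ∅ := fun n e => ⟨1, one_mem _, Or.inr (by simp)⟩

/-- The σ-algebra of completely Ramsey sets. -/
@[reducible] def ms (R : RamseyMonoid M) : MeasurableSpace M where
  MeasurableSet' X := R.CR X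
  measurableSet_empty := CR.empty
  measurableSet_compl _ h := h.compl
  measurableSet_iUnion _ h := CR.iUnion h

end RamseyMonoid

/-! ### Part 2: the Carlson–Simpson theorem via ultrafilters -/

section CarlsonSimpson

attribute [local instance] Ultrafilter.mul Ultrafilter.semigroup

theorem Ultrafilter.map_mul_hom {M N : Type} [Monoid M] [Monoid N] (f : M →* N)
    (U V : Ultrafilter M) : (U * V).map f = U.map f * V.map f := by
  apply Ultrafilter.coe_inj.mp
  apply Filter.ext'
  intro p
  rw [Ultrafilter.eventually_mul]
  simp only [Ultrafilter.coe_map, Filter.eventually_map]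
  rw [Ultrafilter.eventually_mul]
  simp only [map_mul]

theorem exists_min_left_ideal (W : Type) [Monoid W] :
    ∃ L : Set (Ultrafilter W), L.Nonempty ∧ (∀ x, ∀ y ∈ L, x * y ∈ L) ∧
      ∀ q ∈ L, ∀ r ∈ L, ∃ z, r = z * q := by
  let S : Set (Set (Ultrafilter W)) :=
    {L | IsClosed L ∧ L.Nonempty ∧ ∀ x, ∀ y ∈ L, x * y ∈ L}
  obtain ⟨L, hL⟩ : ∃ L, Minimal (· ∈ S) L := by
    refine zorn_superset _ fun c hcs hc => ?_
    refine ⟨⋂₀ c, ⟨isClosed_sInter fun t ht => (hcs ht).1, ?_, fun x y hy => ?_⟩,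
      fun s hs => Set.sInter_subset_of_mem hs⟩
    · obtain rfl | hcnemp := c.eq_empty_or_nonempty
      · rw [Set.sInter_empty]
        exact ⟨pure 1, Set.mem_univ _⟩
      · have : Nonempty c := hcnemp.to_subtype
        exact IsCompact.nonempty_sInter_of_directed_nonempty_isCompact_isClosed
          (IsChain.directedOn hc.symm) (fun i hi => (hcs hi).2.1)
          (fun i hi => (hcs hi).1.isCompact) (fun i hi => (hcs hi).1)
    · rw [Set.mem_sInter]
      exact fun t ht => (hcs ht).2.2 x y (Set.mem_sInter.1 hy t ht)
  refine ⟨L, hL.prop.2.1, hL.prop.2.2, fun q hq r hr => ?_⟩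
  have h1 : Set.range (fun z : Ultrafilter W => z * q) ∈ S := by
    refine ⟨(isCompact_range (Ultrafilter.continuous_mul_left q)).isClosed, ⟨_, ⟨q, rfl⟩⟩, ?_⟩
    rintro x _ ⟨z, rfl⟩
    exact ⟨x * z, mul_assoc _ _ _⟩
  have h2 : Set.range (fun z : Ultrafilter W => z * q) ⊆ L := by
    rintro _ ⟨z, rfl⟩
    exact hL.prop.2.2 _ _ hq
  obtain ⟨z, hz⟩ := hL.le_of_le h1 h2 hr
  exact ⟨z, hz.symm⟩

/-- substitution of a letter for the variable -/
def csSub {Λ : Type} (a : Λ) : FreeMonoid (Option Λ) →* FreeMonoid Λ :=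
  FreeMonoid.map (fun o => o.getD a)

def csLeft (Λ : Type) : Set (FreeMonoid (Option Λ)) := {x | ∃ y, x = FreeMonoid.of none * y}

theorem exists_left_ultra (Λ : Type) : ∃ V : Ultrafilter (FreeMonoid (Option Λ)),
    csLeft Λ ∈ V ∧ ∀ a b : Λ, V.map (csSub a) * V.map (csSub b) = V.map (csSub a) := by
  obtain ⟨L, ⟨p, hp⟩, hL, hmin⟩ := exists_min_left_ideal (FreeMonoid Λ)
  let ι : FreeMonoid Λ →* FreeMonoid (Option Λ) := FreeMonoid.map some
  let p' : Ultrafilter (FreeMonoid (Option Λ)) := p.map ι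
  have hp' : ∀ a, p'.map (csSub a) = p := by
    intro a
    have : (csSub a) ∘ ι = id := by
      funext x
      have : (csSub a).comp ι = MonoidHom.id _ := by
        apply FreeMonoid.hom_eq
        intro x
        simp [csSub, ι]
      exact DFunLike.congr_fun this x
    show (p.map ι).map (csSub a) = p
    rw [Ultrafilter.map_map, this, Ultrafilter.map_id]
  have hright : ∀ y z : Ultrafilter (FreeMonoid (Option Λ)), csLeft Λ ∈ y → csLeft Λ ∈ y * z := by
    intro y z hy
    have : ∀ᶠ m in (↑(y * z) : Filter (FreeMonoid (Option Λ))), m ∈ csLeft Λ := by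
      rw [Ultrafilter.eventually_mul]
      filter_upwards [hy] with x hx
      obtain ⟨u, rfl⟩ := hx
      exact Filter.Eventually.of_forall fun v => ⟨u * v, mul_assoc _ _ _⟩
    exact this
  let J := (fun y => y * p') '' {y : Ultrafilter (FreeMonoid (Option Λ)) | csLeft Λ ∈ y}
  obtain ⟨V, ⟨y, hy, hyV⟩, hV⟩ := exists_idempotent_in_compact_subsemigroup
    (M := Ultrafilter (FreeMonoid (Option Λ))) Ultrafilter.continuous_mul_left J
    (by
      refine ⟨_, pure (FreeMonoid.of none), ?_, rfl⟩
      show csLeft Λ ∈ (pure (FreeMonoid.of none) : Ultrafilter (FreeMonoid (Option Λ)))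
      rw [Ultrafilter.mem_pure]
      exact ⟨1, by simp⟩)
    ((ultrafilter_isClosed_basic _).isCompact.image (Ultrafilter.continuous_mul_left p'))
    (by
      rintro _ ⟨y, hy, rfl⟩ _ ⟨z, hz, rfl⟩
      refine ⟨y * p' * z, hright _ _ (hright _ _ hy), ?_⟩
      simp only [mul_assoc])
  refine ⟨V, ?_, ?_⟩
  · rw [← hyV]; exact hright _ _ hy
  · have hm : ∀ a, V.map (csSub a) ∈ L := by
      intro a
      rw [← hyV, Ultrafilter.map_mul_hom, hp']
      exact hL _ _ hp
    intro a b
    obtain ⟨z, hz⟩ := hmin _ (hm b) _ (hm a)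
    rw [hz, mul_assoc, ← Ultrafilter.map_mul_hom, hV]

/-- iterated substitution -/
def csG {Λ : Type} (v : ℕ → FreeMonoid (Option Λ)) : ℕ → List Λ → FreeMonoid Λ
  | _, [] => 1
  | j, a :: l => csSub a (v j) * csG v (j + 1) l

theorem carlson_simpson_aux {Λ : Type} [Finite Λ] (V : Ultrafilter (FreeMonoid (Option Λ)))
    (hV : csLeft Λ ∈ V)
    (hVV : ∀ a b : Λ, V.map (csSub a) * V.map (csSub b) = V.map (csSub a))
    (a₀ : Λ) (A : Set (FreeMonoid Λ)) (hA : A ∈ V.map (csSub a₀)) :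
    ∃ (w : FreeMonoid Λ) (v : ℕ → FreeMonoid (Option Λ)), (∀ j, v j ∈ csLeft Λ) ∧
      ∀ l : List Λ, w * csG v 0 l ∈ A := by
  let B : Set (FreeMonoid Λ) :=
    {w | w ∈ A ∧ ∀ a, ∀ᶠ v in (V : Filter (FreeMonoid (Option Λ))), w * csSub a v ∈ A}
  have key : ∀ a b : Λ, ∀ P : FreeMonoid Λ → Prop,
      (∀ᶠ v in (V : Filter (FreeMonoid (Option Λ))), P (csSub a v)) ↔
      ∀ᶠ v in (V : Filter (FreeMonoid (Option Λ))),
        ∀ᶠ v' in (V : Filter (FreeMonoid (Option Λ))), P (csSub a v * csSub b v') := by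
    intro a b P
    have h1 : (∀ᶠ w in (↑(V.map (csSub a)) : Filter (FreeMonoid Λ)), P w) ↔
      ∀ᶠ w in (↑(V.map (csSub a)) : Filter (FreeMonoid Λ)),
        ∀ᶠ w' in (↑(V.map (csSub b)) : Filter (FreeMonoid Λ)), P (w * w') := by
      rw [← Ultrafilter.eventually_mul, hVV]
    simpa only [Ultrafilter.coe_map, Filter.eventually_map] using h1
  have hB : ∀ w ∈ B, ∀ᶠ v in (V : Filter (FreeMonoid (Option Λ))), ∀ a, w * csSub a v ∈ B := by
    intro w hw
    rw [Filter.eventually_all]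
    intro a
    refine (hw.2 a).and ?_
    rw [Filter.eventually_all]
    intro b
    have := (key a b (fun x => w * x ∈ A)).1 (hw.2 a)
    simpa only [mul_assoc] using this
  obtain ⟨w₀, hw₀⟩ : B.Nonempty := by
    have h1 : ∀ᶠ v in (V : Filter (FreeMonoid (Option Λ))), csSub a₀ v ∈ B := by
      refine Filter.Eventually.and hA ?_
      rw [Filter.eventually_all]
      intro b
      exact (key a₀ b (fun x => x ∈ A)).1 hA
    obtain ⟨v, hv⟩ := h1.exists
    exact ⟨_, hv⟩
  have step : ∀ F : Set (FreeMonoid Λ), F.Finite → F ⊆ B →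
      ∃ v ∈ csLeft Λ, ∀ w ∈ F, ∀ a, w * csSub a v ∈ B := by
    intro F hF hFB
    have h1 : ∀ᶠ v in (V : Filter (FreeMonoid (Option Λ))), ∀ w ∈ F, ∀ a, w * csSub a v ∈ B := by
      rw [Filter.eventually_all_finite hF]
      exact fun w hw => hB w (hFB hw)
    obtain ⟨v, hv1, hv2⟩ := (h1.and hV).exists
    exact ⟨v, hv2, hv1⟩
  let St := {F : Set (FreeMonoid Λ) // F.Finite ∧ F ⊆ B}
  choose nx hnx1 hnx2 using fun F : St => step F.1 F.2.1 F.2.2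
  let next : St → St := fun F => ⟨Set.image2 (fun w a => w * csSub a (nx F)) F.1 Set.univ,
    F.2.1.image2 _ Set.finite_univ, by
      rintro _ ⟨w, hw, a, -, rfl⟩
      exact hnx2 F w hw a⟩
  let seq : ℕ → St := fun j => Nat.rec ⟨{w₀}, Set.finite_singleton _, by simpa using hw₀⟩
    (fun _ F => next F) j
  refine ⟨w₀, fun j => nx (seq j), fun j => hnx1 _, ?_⟩
  have main : ∀ (l : List Λ) (j : ℕ) (w : FreeMonoid Λ), w ∈ (seq j).1 →
      w * csG (fun j => nx (seq j)) j l ∈ B := by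
    intro l
    induction l with
    | nil => intro j w hw; simpa [csG] using (seq j).2.2 hw
    | cons a l ih =>
      intro j w hw
      rw [csG, ← mul_assoc]
      exact ih (j + 1) _ ⟨w, hw, a, Set.mem_univ _, rfl⟩
  intro l
  exact (main l 0 w₀ rfl).1

theorem carlson_simpson {Λ : Type} [Finite Λ] [Nonempty Λ] (A : Set (FreeMonoid Λ)) :
    ∃ (w : FreeMonoid Λ) (v : ℕ → FreeMonoid (Option Λ)), (∀ j, v j ∈ csLeft Λ) ∧
      ((∀ l : List Λ, w * csG v 0 l ∈ A) ∨ (∀ l : List Λ, w * csG v 0 l ∉ A)) := by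
  obtain ⟨V, hV, hVV⟩ := exists_left_ultra Λ
  obtain ⟨a₀⟩ := ‹Nonempty Λ›
  rcases Ultrafilter.mem_or_compl_mem (V.map (csSub a₀)) A with h | h
  · obtain ⟨w, v, h1, h2⟩ := carlson_simpson_aux V hV hVV a₀ A h
    exact ⟨w, v, h1, Or.inl h2⟩
  · obtain ⟨w, v, h1, h2⟩ := carlson_simpson_aux V hV hVV a₀ _ h
    exact ⟨w, v, h1, Or.inr h2⟩

end CarlsonSimpson

/-! ### Part 3: the monoid of strong embeddings -/

structure IsSE (f : List Bool → List Bool) : Prop where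
  len : ∀ u v, u.length = v.length → (f u).length = (f v).length
  ext : ∀ u b, f u ++ [b] <+: f (u ++ [b])

namespace IsSE

variable {f g : List Bool → List Bool}

theorem pre (hf : IsSE f) (u w : List Bool) : f u <+: f (u ++ w) := by
  induction w using List.reverseRecOn with
  | nil => simp
  | append_singleton w b ih =>
    rw [← List.append_assoc]
    exact ih.trans ((List.prefix_append _ _).trans (hf.ext _ b))

theorem ext' (hf : IsSE f) {u v : List Bool} {b : Bool} (h : u ++ [b] <+: v) :
    f u ++ [b] <+: f v := by
  obtain ⟨w, rfl⟩ := h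
  exact (hf.ext u b).trans (hf.pre _ _)

theorem mono (hf : IsSE f) {u v : List Bool} (h : u <+: v) : f u <+: f v := by
  obtain ⟨w, rfl⟩ := h
  exact hf.pre _ _

theorem comp (hf : IsSE f) (hg : IsSE g) : IsSE (f ∘ g) :=
  ⟨fun u v h => hf.len _ _ (hg.len _ _ h), fun u b => hf.ext' (hg.ext u b)⟩

theorem len_succ (hf : IsSE f) (u : List Bool) (b : Bool) :
    (f u).length < (f (u ++ [b])).length := by
  have := (hf.ext u b).length_le
  simp at this
  omega

theorem len_lt (hf : IsSE f) {u v : List Bool} (h : u.length < v.length) :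
    (f u).length < (f v).length := by
  have h1 : (f u).length = (f (v.take u.length)).length := hf.len _ _ (by simp; omega)
  rw [h1]
  obtain ⟨b, w, hw⟩ : ∃ b w, v.drop u.length = b :: w := by
    cases hd : v.drop u.length with
    | nil => simp at hd; omega
    | cons b w => exact ⟨b, w, rfl⟩
  have : v = v.take u.length ++ [b] ++ w := by
    conv_lhs => rw [← List.take_append_drop u.length v, hw]
    simp
  conv_rhs => rw [this]
  exact (hf.len_succ _ b).trans_le (hf.pre _ _).length_le

theorem len_lt_iff (hf : IsSE f) {u v : List Bool} :
    (f u).length < (f v).length ↔ u.length < v.length := by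
  refine ⟨fun h => ?_, hf.len_lt⟩
  by_contra hc
  rcases (not_lt.1 hc).lt_or_eq with h' | h'
  · exact absurd (hf.len_lt h') (by omega)
  · exact absurd (hf.len _ _ h') (by omega)

theorem len_eq_iff (hf : IsSE f) {u v : List Bool} :
    (f u).length = (f v).length ↔ u.length = v.length := by
  have h1 := hf.len_lt_iff (u := u) (v := v)
  have h2 := hf.len_lt_iff (u := v) (v := u)
  omega

theorem le_len (hf : IsSE f) (u : List Bool) : u.length ≤ (f u).length := by
  induction u using List.reverseRecOn with
  | nil => simp
  | append_singleton u b ih =>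
    have := hf.len_succ u b
    simp; omega

theorem append_singleton_eq {u v w : List Bool} {b c : Bool} (h1 : u ++ [b] <+: w)
    (h2 : v ++ [c] <+: w) (h : u.length = v.length) : u = v ∧ b = c := by
  have : u ++ [b] = v ++ [c] :=
    (List.prefix_of_prefix_length_le h1 h2 (by simp [h])).eq_of_length (by simp [h])
  simpa using List.append_inj' this rfl

theorem inj (hf : IsSE f) : Function.Injective f := by
  intro u
  induction u using List.reverseRecOn with
  | nil =>
    intro v h
    have := hf.len_eq_iff.1 (congrArg List.length h)
    simp at this
    rw [List.eq_nil_of_length_eq_zero (by omega : v.length = 0)]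
  | append_singleton u b ih =>
    intro v h
    have hl := hf.len_eq_iff.1 (congrArg List.length h)
    induction v using List.reverseRecOn with
    | nil => simp at hl
    | append_singleton v c _ =>
      simp at hl
      have h1 := hf.ext u b
      rw [h] at h1
      obtain ⟨h2, rfl⟩ := append_singleton_eq h1 (hf.ext v c) (hf.len _ _ hl)
      rw [ih h2]

theorem reflect (hf : IsSE f) {u v : List Bool} {b : Bool} (h : f u ++ [b] <+: f v) :
    u ++ [b] <+: v := by
  have hl : u.length < v.length := by
    rw [← hf.len_lt_iff]
    have := h.length_le
    simp at this
    omega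
  obtain ⟨c, w, hw⟩ : ∃ c w, v.drop u.length = c :: w := by
    cases hd : v.drop u.length with
    | nil => simp at hd; omega
    | cons c w => exact ⟨c, w, rfl⟩
  have hv : v = v.take u.length ++ [c] ++ w := by
    conv_lhs => rw [← List.take_append_drop u.length v, hw]
    simp
  have hp : v.take u.length ++ [c] <+: v := ⟨w, hv.symm⟩
  obtain ⟨h2, rfl⟩ := append_singleton_eq h (hf.ext' hp) (hf.len _ _ (by simp; omega))
  rwa [← hf.inj h2] at hp

end IsSE

/-- strong embeddings -/
structure SE : Type where
  val : List Bool → List Bool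
  property : IsSE val

namespace SE

instance : CoeFun SE (fun _ => List Bool → List Bool) := ⟨fun f => f.1⟩

@[ext] theorem ext' {f g : SE} (h : ∀ u, f u = g u) : f = g := by
  cases f; cases g; congr; exact funext h

instance : Monoid SE where
  mul f g := ⟨f.1 ∘ g.1, f.2.comp g.2⟩
  one := ⟨id, ⟨fun _ _ h => h, fun _ _ => List.prefix_rfl⟩⟩
  mul_assoc _ _ _ := rfl
  one_mul _ := rfl
  mul_one _ := rfl

@[simp] theorem mul_apply (f g : SE) (u : List Bool) : (f * g) u = f (g u) := rfl
@[simp] theorem one_apply (u : List Bool) : (1 : SE) u = u := rfl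

def F (n : ℕ) : Submonoid SE where
  carrier := {f | ∀ u, u.length < n → f u = u}
  one_mem' := fun _ _ => rfl
  mul_mem' := by
    intro f g hf hg u hu
    rw [mul_apply, hg u hu, hf u hu]

theorem mem_F {n : ℕ} {f : SE} : f ∈ F n ↔ ∀ u, u.length < n → f u = u := Iff.rfl

theorem F_pre {n : ℕ} {f : SE} (hf : f ∈ F n) {x : List Bool} (hx : x.length = n)
    (w : List Bool) : x <+: f (x ++ w) := by
  refine List.IsPrefix.trans ?_ (f.2.pre x w)
  induction x using List.reverseRecOn with
  | nil => simp
  | append_singleton x b _ =>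
    have := f.2.ext x b
    rwa [hf x (by simp at hx; omega)] at this

def T (k m : ℕ) : Set SE :=
  {h | (∀ u, u.length < k → (h u).length < m) ∧
    ∀ x, x.length = k → (h x).length = m ∧ ∀ w, h (x ++ w) = h x ++ w}

theorem T_fin (k m : ℕ) : (T k m).Finite := by
  have h1 : Finite {u : List Bool | u.length ≤ k} := List.finite_length_le Bool k
  have h2 : Finite {u : List Bool | u.length ≤ m} := List.finite_length_le Bool m
  have hle : ∀ h ∈ T k m, ∀ u : List Bool, u.length ≤ k → (h u).length ≤ m := by
    intro h hh u hu
    rcases hu.lt_or_eq with hu | hu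
    · exact (hh.1 u hu).le
    · exact (hh.2 u hu).1.le
  let φ : T k m → ({u : List Bool | u.length ≤ k} → {u : List Bool | u.length ≤ m}) :=
    fun h u => ⟨h.1 u.1, hle h.1 h.2 u.1 u.2⟩
  have hφ : Function.Injective φ := by
    intro h h' he
    apply Subtype.ext
    have key : ∀ u : List Bool, u.length ≤ k → h.1 u = h'.1 u := by
      intro u hu
      exact congrArg Subtype.val (congrFun he ⟨u, hu⟩)
    ext1 u
    by_cases hu : u.length ≤ k
    · exact key u hu
    · rw [← List.take_append_drop k u, (h.2.2 _ (by simp; omega)).2,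
        (h'.2.2 _ (by simp; omega)).2, key _ (by simp)]
  exact Set.finite_coe_iff.1 (Finite.of_injective φ hφ)

/-- factorisation through a tight embedding -/
theorem factor {k m : ℕ} {h φ : SE} (hh : h ∈ T k m) (h1 : ∀ u, u.length < k → φ u = h u)
    (h2 : ∀ x, x.length = k → h x <+: φ x) : ∃ g ∈ F k, φ = h * g := by
  have hm : ∀ u : List Bool, k ≤ u.length → m ≤ (φ u).length := by
    intro u hu
    have h3 : (u.take k).length = k := by simp; omega
    have h4 := (h2 _ h3).length_le
    rw [(hh.2 _ h3).1] at h4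
    exact h4.trans (φ.2.mono (List.take_prefix k u)).length_le
  refine ⟨⟨fun u => if u.length < k then u else u.take k ++ (φ u).drop m, ?_, ?_⟩, ?_, ?_⟩
  · intro u v huv
    have := φ.2.len u v huv
    by_cases hu : u.length < k
    · simp only [hu, if_true, show v.length < k by omega]; exact huv
    · simp only [hu, if_false, show ¬ v.length < k by omega, List.length_append,
        List.length_take, List.length_drop]
      omega
  · intro u b
    by_cases hu : u.length + 1 < k
    · simp [hu, show u.length < k by omega]
    · by_cases hu' : u.length < k
      · have : k = (u ++ [b]).length := by simp; omega
        simp only [hu', if_true, List.length_append, List.length_singleton, hu, if_false]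
        rw [this, List.take_length]
        exact List.prefix_append _ _
      · simp only [hu', if_false, List.length_append, List.length_singleton, hu]
        rw [List.take_append_of_le_length (by omega), List.append_assoc]
        apply (List.prefix_append_right_inj _).2
        have := φ.2.ext u b
        obtain ⟨w, hw⟩ := this
        refine ⟨w, ?_⟩
        rw [← hw, List.append_assoc, List.append_assoc,
          List.drop_append_of_le_length (hm u (by omega))]
  · intro u hu
    simp [hu]
  · ext1 u
    rw [mul_apply]
    by_cases hu : u.length < k
    · simp only [hu, if_true]; exact h1 u hu
    · simp only [hu, if_false]
      have h3 : (u.take k).length = k := by simp; omega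
      rw [(hh.2 _ h3).2]
      obtain ⟨w, hw⟩ := (h2 _ h3).trans (φ.2.mono (List.take_prefix k u))
      have h4 := (hh.2 _ h3).1
      rw [← hw, ← h4, List.drop_left]

theorem push {k m : ℕ} {h g : SE} (hh : h ∈ T k m) (hg : g ∈ F m) :
    ∃ g' ∈ F k, g * h = h * g' := by
  refine factor hh ?_ ?_
  · intro u hu
    exact hg _ (hh.1 u hu)
  · intro x hx
    have := F_pre hg (hh.2 x hx).1 []
    simpa using this

theorem lift {k m : ℕ} {h g : SE} (hh : h ∈ T k m) (hg : g ∈ F k) :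
    ∃ g' ∈ F m, g' * h = h * g := by
  have hσ : ∃ σ : List Bool → List Bool, (∀ y, (σ y).length = k) ∧
      ∀ x, x.length = k → σ (h x) = x := by
    classical
    refine ⟨fun y => if hy : ∃ x, x.length = k ∧ h x = y then hy.choose
      else List.replicate k false, ?_, ?_⟩
    · intro y
      dsimp only
      split_ifs with hy
      · exact hy.choose_spec.1
      · simp
    · intro x hx
      have hy : ∃ x', x'.length = k ∧ h x' = h x := ⟨x, hx, rfl⟩
      show (if hy : ∃ x', x'.length = k ∧ h x' = h x then hy.choose
        else List.replicate k false) = x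
      rw [dif_pos hy]
      exact h.2.inj hy.choose_spec.2
  obtain ⟨σ, hσ1, hσ2⟩ := hσ
  have hk : ∀ y w : List Bool, k ≤ (g (σ y ++ w)).length := by
    intro y w
    have := g.2.le_len (σ y ++ w)
    simp [hσ1] at this
    omega
  refine ⟨⟨fun v => if v.length < m then v else
    v.take m ++ (g (σ (v.take m) ++ v.drop m)).drop k, ?_, ?_⟩, ?_, ?_⟩
  · intro u v huv
    by_cases hu : u.length < m
    · simp only [hu, if_true, show v.length < m by omega]; exact huv
    · have := g.2.len (σ (u.take m) ++ u.drop m) (σ (v.take m) ++ v.drop m)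
        (by simp [hσ1, huv])
      simp only [hu, if_false, show ¬ v.length < m by omega, List.length_append,
        List.length_take, List.length_drop]
      omega
  · intro u b
    by_cases hu : u.length + 1 < m
    · simp [hu, show u.length < m by omega]
    · by_cases hu' : u.length < m
      · have : m = (u ++ [b]).length := by simp; omega
        simp only [hu', if_true, List.length_append, List.length_singleton, hu, if_false]
        conv_rhs => rw [this, List.take_length]
        exact List.prefix_append _ _
      · simp only [hu', if_false, List.length_append, List.length_singleton, hu]
        rw [List.take_append_of_le_length (by omega), List.append_assoc,
          List.drop_append_of_le_length (by omega)]
        apply (List.prefix_append_right_inj _).2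
        obtain ⟨w, hw⟩ := g.2.ext (σ (u.take m) ++ u.drop m) b
        refine ⟨w, ?_⟩
        rw [List.append_assoc] at hw
        rw [← List.append_assoc (σ _), List.append_assoc _ [b], ← List.drop_append_of_le_length (hk _ _)]
        congr 1
  · intro u hu
    simp [hu]
  · ext1 u
    rw [mul_apply, mul_apply]
    by_cases hu : u.length < k
    · simp only [hh.1 u hu, if_true]; rw [hg u hu]
    · have h3 : (u.take k).length = k := by simp; omega
      have h4 := hh.2 _ h3
      have h5 : h u = h (u.take k) ++ u.drop k := by
        rw [← h4.2, List.take_append_drop]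
      have h6 : (h u).take m = h (u.take k) := by rw [h5, ← h4.1, List.take_left]
      have h7 : (h u).drop m = u.drop k := by rw [h5, ← h4.1, List.drop_left]
      have h8 : ¬ (h u).length < m := by rw [h5]; simp [h4.1]
      simp only [h8, if_false]
      rw [h6, h7, hσ2 _ h3, List.take_append_drop]
      obtain ⟨w, hw⟩ := F_pre hg h3 (u.drop k)
      rw [List.take_append_drop] at hw
      rw [← hw, h4.2]
      congr 1
      conv_lhs => rw [← h3]
      simp

/-- tight truncation -/
def tr (k : ℕ) (g : SE) : SE :=
  ⟨fun u => if u.length < k then g u else g (u.take k) ++ u.drop k, by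
    constructor
    · intro u v huv
      by_cases hu : u.length < k
      · simp only [hu, if_true, show v.length < k by omega]; exact g.2.len _ _ huv
      · have := g.2.len (u.take k) (v.take k) (by simp [huv])
        simp only [hu, if_false, show ¬ v.length < k by omega, List.length_append,
          List.length_drop]
        omega
    · intro u b
      by_cases hu : u.length + 1 < k
      · simp only [hu, show u.length < k by omega, if_true, List.length_append,
          List.length_singleton]
        exact g.2.ext u b
      · by_cases hu' : u.length < k
        · have : k = (u ++ [b]).length := by simp; omega
          simp only [hu', if_true, List.length_append, List.length_singleton, hu, if_false]
          rw [this, List.take_length, List.drop_length, List.append_nil]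
          exact g.2.ext u b
        · simp only [hu', if_false, List.length_append, List.length_singleton, hu]
          rw [List.take_append_of_le_length (by omega), List.append_assoc,
            List.drop_append_of_le_length (by omega)]⟩

theorem tr_apply (k : ℕ) (g : SE) (u : List Bool) :
    tr k g u = if u.length < k then g u else g (u.take k) ++ u.drop k := rfl

theorem tr_le (k : ℕ) (g : SE) (u : List Bool) (hu : u.length ≤ k) : tr k g u = g u := by
  rw [tr_apply]
  split_ifs with h
  · rfl
  · have : k = u.length := by omega
    subst this
    simp

theorem tr_congr {k : ℕ} {g g' : SE} (h : ∀ u : List Bool, u.length ≤ k → g u = g' u) :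
    tr k g = tr k g' := by
  ext1 u
  rw [tr_apply, tr_apply]
  split_ifs with hu
  · exact h u hu.le
  · rw [h _ (by simp)]

theorem tr_mem (k : ℕ) (g : SE) {n : ℕ} (v : List Bool) (hv : v.length = k)
    (hn : (g v).length = n) : tr k g ∈ T (k + 1) (n + 1) := by
  subst hn
  constructor
  · intro u hu
    rw [tr_le _ _ _ (by omega)]
    rcases (Nat.lt_succ_iff.1 hu).lt_or_eq with h | h
    · have := g.2.len_lt (show u.length < v.length by omega)
      omega
    · have := g.2.len u v (by omega)
      omega
  · intro x hx
    have hx' : ¬ x.length < k := by omega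
    constructor
    · have := g.2.len (x.take k) v (by simp; omega)
      rw [tr_apply, if_neg hx', List.length_append, List.length_drop]
      omega
    · intro w
      rw [tr_apply, tr_apply, if_neg hx', if_neg (by simp; omega),
        List.take_append_of_le_length (by omega), List.drop_append_of_le_length (by omega),
        List.append_assoc]

theorem tr_fac (k : ℕ) (g : SE) : ∃ g' ∈ F (k + 1), g = tr k g * g' := by
  refine factor (tr_mem k g (List.replicate k false) (by simp) rfl) ?_ ?_
  · intro u hu
    rw [tr_le _ _ _ (by omega)]
  · intro x hx
    induction x using List.reverseRecOn with
    | nil => simp at hx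
    | append_singleton x b _ =>
      simp at hx
      subst hx
      rw [tr_apply, if_neg (by simp)]
      simp only [List.take_left, List.drop_left]
      exact g.2.ext x b

theorem fac (g : SE) (k : ℕ) : ∃ m, k ≤ m ∧ ∃ h ∈ T k m, ∃ g' ∈ F k, g = h * g' := by
  cases k with
  | zero =>
    refine ⟨0, le_rfl, 1, ⟨by simp, by simp⟩, g, ?_, rfl⟩
    intro u hu
    simp at hu
  | succ k =>
    obtain ⟨g', hg', h⟩ := tr_fac k g
    have := g.2.le_len (List.replicate k false)
    simp at this
    exact ⟨_, by omega, _, tr_mem k g (List.replicate k false) (by simp) rfl, g', hg', h⟩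

/-- finite products -/
def pr (g : ℕ → SE) : ℕ → ℕ → SE
  | _, 0 => 1
  | m, j + 1 => g m * pr g (m + 1) j

theorem pr_succ (g : ℕ → SE) (j : ℕ) : ∀ m, pr g m (j + 1) = pr g m j * g (m + j) := by
  induction j with
  | zero => intro m; rfl
  | succ j ih =>
    intro m
    rw [pr, ih (m + 1), pr, mul_assoc]
    congr 3
    omega

theorem F_anti : Antitone F := fun _ _ h _ hf u hu => hf u (hu.trans_le h)

theorem iprod (g : ℕ → SE) (hg : ∀ m, g m ∈ F m) :
    ∃ G : ℕ → SE, (∀ m, G m ∈ F m) ∧ ∀ m, G m = g m * G (m + 1) := by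
  have hmem : ∀ j m, pr g m j ∈ F m := by
    intro j
    induction j with
    | zero => intro m; exact one_mem _
    | succ j ih => intro m; exact mul_mem (hg m) (F_anti (Nat.le_succ m) (ih (m + 1)))
  have hstab : ∀ (m : ℕ) (u : List Bool) (j : ℕ), u.length + 1 ≤ j →
      pr g m j u = pr g m (u.length + 1) u := by
    intro m u j hj
    induction j, hj using Nat.le_induction with
    | base => rfl
    | succ j hj ih => rw [pr_succ, mul_apply, hg (m + j) u (by omega), ih]
  refine ⟨fun m => ⟨fun u => pr g m (u.length + 1) u, ?_, ?_⟩, ?_, ?_⟩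
  · intro u v huv
    rw [huv]
    exact (pr g m _).2.len _ _ huv
  · intro u b
    rw [← hstab m u ((u ++ [b]).length + 1) (by simp)]
    exact (pr g m _).2.ext _ _
  · intro m u hu
    exact hmem (u.length + 1) m u hu
  · intro m
    ext1 u
    show pr g m (u.length + 1) u = g m (pr g (m + 1) (u.length + 1) u)
    rw [← hstab m u (u.length + 2) (by omega)]
    rfl

end SE

/-! ### Part 4: the pigeonhole principle (Halpern–Läuchli) -/

namespace SE

/-- evaluation of a letter of the alphabet `2^(2^k)` -/
def ev (k : ℕ) (x : List Bool) (l : {x : List Bool // x.length = k} → Bool) : Bool :=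
  if h : x.length = k then l ⟨x, h⟩ else false

def evO (k : ℕ) (x : List Bool) (b : Bool)
    (o : Option ({x : List Bool // x.length = k} → Bool)) : Bool :=
  match o with
  | none => b
  | some l => ev k x l

def hlH (k : ℕ) (v : ℕ → FreeMonoid (Option ({x : List Bool // x.length = k} → Bool)))
    (x : List Bool) : ℕ → List Bool → List Bool
  | _, [] => []
  | j, b :: u => (FreeMonoid.toList (v j)).map (evO k x b) ++ hlH k v x (j + 1) u

variable {k : ℕ} {v : ℕ → FreeMonoid (Option ({x : List Bool // x.length = k} → Bool))}

theorem hlH_len (x y : List Bool) : ∀ (u w : List Bool) (j : ℕ), u.length = w.length →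
    (hlH k v x j u).length = (hlH k v y j w).length := by
  intro u
  induction u with
  | nil => intro w j h; cases w with
    | nil => rfl
    | cons => simp at h
  | cons b u ih => intro w j h; cases w with
    | nil => simp at h
    | cons c w =>
      simp only [hlH, List.length_append, List.length_map]
      rw [ih w (j + 1) (by simpa using h)]

theorem hlH_snoc (x : List Bool) (b : Bool) : ∀ (u : List Bool) (j : ℕ),
    hlH k v x j (u ++ [b]) =
      hlH k v x j u ++ (FreeMonoid.toList (v (j + u.length))).map (evO k x b) := by
  intro u
  induction u with
  | nil => intro j; simp [hlH]
  | cons c u ih =>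
    intro j
    rw [List.cons_append, hlH, hlH, ih, List.append_assoc]
    congr 5
    simp; omega

theorem hlH_csG (x : List Bool) (l : List ({x : List Bool // x.length = k} → Bool)) : ∀ j,
    (FreeMonoid.toList (csG v j l)).map (ev k x) = hlH k v x j (l.map (ev k x)) := by
  induction l with
  | nil => intro j; rfl
  | cons a l ih =>
    intro j
    rw [csG, FreeMonoid.toList_mul, List.map_append, ih, List.map_cons, hlH]
    congr 1
    rw [csSub, FreeMonoid.toList_map, List.map_map]
    apply List.map_congr_left
    intro o _
    cases o <;> rfl

theorem hl_ext (hv : ∀ j, v j ∈ csLeft _) (x : List Bool) (u : List Bool) (b : Bool) (j : ℕ) :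
    hlH k v x j u ++ [b] <+: hlH k v x j (u ++ [b]) := by
  rw [hlH_snoc]
  apply (List.prefix_append_right_inj _).2
  obtain ⟨y, hy⟩ := hv (j + u.length)
  rw [hy]
  simp [evO]

/-- words from tuples -/
theorem exists_word (k n : ℕ) (w : List Bool → List Bool)
    (hw : ∀ x : List Bool, x.length = k → (w x).length = n) :
    ∃ l : List ({x : List Bool // x.length = k} → Bool), ∀ x : List Bool, x.length = k →
      l.map (ev k x) = w x := by
  refine ⟨(List.range n).map (fun j x => (w x.1).getD j false), ?_⟩
  intro x hx
  rw [List.map_map]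
  apply List.ext_getElem
  · simp [hw x hx]
  · intro i h1 h2
    simp [ev, hx, h2]

theorem ph (k : ℕ) (O : Set SE)
    (hO : ∀ g ∈ F k, ∀ g' ∈ F (k + 1), (g ∈ O ↔ g * g' ∈ O)) :
    ∃ g ∈ F k, (∀ g' ∈ F k, g * g' ∈ O) ∨ (∀ g' ∈ F k, g * g' ∉ O) := by
  have hfin : Finite {x : List Bool // x.length = k} := List.finite_length_eq Bool k
  let A : Set (FreeMonoid ({x : List Bool // x.length = k} → Bool)) :=
    {w | ∃ g ∈ F k, g ∈ O ∧ ∀ x : List Bool, x.length = k →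
      g x = x ++ (FreeMonoid.toList w).map (ev k x)}
  have hA : ∀ g ∈ F k, ∀ w, (∀ x : List Bool, x.length = k →
      g x = x ++ (FreeMonoid.toList w).map (ev k x)) → (g ∈ O ↔ w ∈ A) := by
    intro g hg w hw
    refine ⟨fun h => ⟨g, hg, h, hw⟩, ?_⟩
    rintro ⟨g', hg', h', hw'⟩
    have htr : tr k g = tr k g' := by
      apply tr_congr
      intro u hu
      rcases hu.lt_or_eq with hu | hu
      · rw [hg u hu, hg' u hu]
      · rw [hw u hu, hw' u hu]
    have hmem : ∀ g ∈ F k, tr k g ∈ F k := by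
      intro g hg u hu
      rw [tr_le _ _ _ hu.le, hg u hu]
    obtain ⟨g1, hg1, e1⟩ := tr_fac k g
    obtain ⟨g2, hg2, e2⟩ := tr_fac k g'
    rw [e1, ← hO _ (hmem g hg) _ hg1, htr, hO _ (hmem g' hg') _ hg2, ← e2]
    exact h'
  obtain ⟨w, v, hv, hmono⟩ := carlson_simpson A
  let f : List Bool → List Bool → List Bool :=
    fun x u => (FreeMonoid.toList w).map (ev k x) ++ hlH k v x 0 u
  have hflen : ∀ x y u u' : List Bool, u.length = u'.length →
      (f x u).length = (f y u').length := by
    intro x y u u' h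
    simp only [f, List.length_append, List.length_map]
    rw [hlH_len x y u u' 0 h]
  have hfext : ∀ x u b, f x u ++ [b] <+: f x (u ++ [b]) := by
    intro x u b
    simp only [f, List.append_assoc]
    apply (List.prefix_append_right_inj _).2
    exact hl_ext hv x u b 0
  let g : SE := ⟨fun u => if u.length < k then u else u.take k ++ f (u.take k) (u.drop k), by
    constructor
    · intro u u' huv
      by_cases hu : u.length < k
      · simp only [hu, if_true, show u'.length < k by omega]; exact huv
      · have := hflen (u.take k) (u'.take k) (u.drop k) (u'.drop k) (by simp [huv])
        simp only [hu, if_false, show ¬ u'.length < k by omega, List.length_append,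
          List.length_take]
        omega
    · intro u b
      by_cases hu : u.length + 1 < k
      · simp [hu, show u.length < k by omega]
      · by_cases hu' : u.length < k
        · have : k = (u ++ [b]).length := by simp; omega
          simp only [hu', if_true, List.length_append, List.length_singleton, hu, if_false]
          rw [List.take_of_length_le (by omega)]
          exact List.prefix_append _ _
        · simp only [hu', if_false, List.length_append, List.length_singleton, hu]
          rw [List.take_append_of_le_length (by omega), List.append_assoc,
            List.drop_append_of_le_length (by omega)]
          apply (List.prefix_append_right_inj _).2
          exact hfext _ _ _⟩
  have hg : g ∈ F k := by
    intro u hu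
    simp [g, hu]
  have hgx : ∀ x u : List Bool, x.length = k → g (x ++ u) = x ++ f x u := by
    intro x u hx
    subst hx
    simp [g]
  have key : ∀ g' ∈ F k, ∃ l, (g * g' ∈ O ↔ w * csG v 0 l ∈ A) := by
    intro g' hg'
    have h1 : ∀ x : List Bool, x.length = k → g' x = x ++ (g' x).drop k := by
      intro x hx
      obtain ⟨t, ht⟩ := F_pre hg' hx []
      rw [List.append_nil] at ht
      rw [← ht, ← hx, List.drop_left]
    obtain ⟨l, hl⟩ := exists_word k ((g' (List.replicate k false)).length - k)
      (fun x => (g' x).drop k) (by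
        intro x hx
        rw [List.length_drop, g'.2.len x (List.replicate k false) (by simp [hx])])
    refine ⟨l, hA _ (mul_mem hg hg') _ ?_⟩
    intro x hx
    rw [mul_apply, h1 x hx, hgx _ _ hx, FreeMonoid.toList_mul, List.map_append, hlH_csG, hl x hx]
  refine ⟨g, hg, hmono.imp ?_ ?_⟩
  · intro h g' hg'
    obtain ⟨l, hl⟩ := key g' hg'
    exact hl.2 (h l)
  · intro h g' hg' hc
    obtain ⟨l, hl⟩ := key g' hg'
    exact h l (hl.1 hc)

/-- strong embeddings form a Ramsey monoid -/
def RM : RamseyMonoid SE where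
  F := F
  T := T
  anti := F_anti
  fin := T_fin
  push := push
  lift := lift
  fac := fac
  iprod := iprod
  ph := ph

end SE

/-! ### Part 5: transfer to strong subtrees -/

namespace SE

/-- level function of a strong embedding -/
def lv (e : SE) (n : ℕ) : ℕ := (e (List.replicate n false)).length

theorem lv_eq (e : SE) (u : List Bool) : (e u).length = e.lv u.length :=
  e.2.len _ _ (by simp)

theorem lv_mono (e : SE) : StrictMono e.lv := fun a b h => e.2.len_lt (by simpa using h)

theorem range_strong (e : SE) : IsStrongSubtree (Set.range e.val) := by
  refine ⟨e.lv, e.lv_mono, ?_, ?_, ?_, ?_⟩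
  · rintro _ ⟨u, rfl⟩
    exact ⟨_, e.lv_eq u⟩
  · refine ⟨e [], ⟨⟨[], rfl⟩, e.lv_eq []⟩, ?_⟩
    rintro _ ⟨⟨u, rfl⟩, hu⟩
    rw [lv_eq] at hu
    rw [List.eq_nil_of_length_eq_zero (e.lv_mono.injective hu)]
  · rintro ℓ _ ⟨u, rfl⟩ hu i
    rw [lv_eq] at hu
    have hu := e.lv_mono.injective hu
    refine ⟨e (u ++ [i]), ⟨⟨_, rfl⟩, ?_, e.2.ext u i⟩, ?_⟩
    · rw [lv_eq]; simp [hu]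
    · rintro _ ⟨⟨w, rfl⟩, hw, h⟩
      rw [lv_eq] at hw
      have hw := e.lv_mono.injective hw
      rw [(e.2.reflect h).eq_of_length (by simp [hu, hw])]
  · rintro ℓ _ ⟨u, rfl⟩ hu
    rw [lv_eq] at hu
    have hu := e.lv_mono.injective hu
    induction u using List.reverseRecOn with
    | nil => simp at hu
    | append_singleton u b _ =>
      simp at hu
      exact ⟨e u, ⟨u, rfl⟩, by rw [lv_eq, hu], b, e.2.ext u b⟩

/-- the strong subtree of a strong embedding -/
def tree (e : SE) : Sinf := ⟨Set.range e.val, e.range_strong⟩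

theorem levelOf_range (e : SE) (n : ℕ) : levelOf (Set.range e.val) n = e.lv n := by
  have hp : ∀ i, (∃ a ∈ Set.range e.val, a.length = e.lv i) := fun i => ⟨_, ⟨_, rfl⟩, rfl⟩
  have h := Nat.nth_comp_of_strictMono (p := fun h => ∃ a ∈ Set.range e.val, a.length = h)
    (n := n) e.lv_mono (by
      rintro k ⟨_, ⟨u, rfl⟩, rfl⟩
      exact ⟨_, (e.lv_eq u).symm⟩) (by
      intro hf
      exfalso
      refine Set.infinite_of_injective_forall_mem e.lv_mono.injective (s := _) ?_ hf
      exact hp)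
  rw [levelOf, ← h]
  congr 1
  have : (fun i => ∃ a ∈ Set.range e.val, a.length = e.lv i) = fun _ => True := by
    funext i
    exact eq_true (hp i)
  rw [this, Nat.nth_true]

theorem mem_lvlSet (e : SE) (n : ℕ) (a : List Bool) :
    a ∈ lvlSet (Set.range e.val) n ↔ ∃ u : List Bool, u.length = n ∧ e u = a := by
  constructor
  · rintro ⟨⟨u, rfl⟩, h⟩
    rw [levelOf_range, lv_eq] at h
    exact ⟨u, e.lv_mono.injective h, rfl⟩
  · rintro ⟨u, rfl, rfl⟩
    exact ⟨⟨u, rfl⟩, by rw [levelOf_range, lv_eq]⟩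

theorem mem_approxT (e : SE) (n : ℕ) (a : List Bool) :
    a ∈ approxT (Set.range e.val) n ↔ ∃ u : List Bool, u.length < n ∧ e u = a := by
  constructor
  · rintro ⟨⟨u, rfl⟩, l, hl, h⟩
    rw [levelOf_range, lv_eq] at h
    exact ⟨u, by rw [e.lv_mono.injective h]; exact hl, rfl⟩
  · rintro ⟨u, hu, rfl⟩
    exact ⟨⟨u, rfl⟩, _, hu, by rw [levelOf_range, lv_eq]⟩

theorem exists_range {A : Set (List Bool)} (hA : IsStrongSubtree A) :
    ∃ e : SE, Set.range e.val = A := by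
  obtain ⟨k, hk, h1, ⟨r, hr, hr'⟩, h2, h3⟩ := hA
  choose c hc hc' using h2
  let bld : (l : List Bool) → {a : List Bool // a ∈ A ∧ a.length = k l.length} :=
    fun l => List.rec (motive := fun l => {a : List Bool // a ∈ A ∧ a.length = k l.length})
      ⟨r, hr⟩ (fun b l a => ⟨c l.length a.1 a.2.1 a.2.2 b, (hc _ _ _ _ _).1, by
        rw [List.length_cons]; exact (hc _ _ _ _ _).2.1⟩) l
  have hb : ∀ b l, (bld (b :: l)).1 = c l.length (bld l).1 (bld l).2.1 (bld l).2.2 b :=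
    fun b l => rfl
  have hlen : ∀ u : List Bool, (bld u.reverse).1.length = k u.length := by
    intro u
    rw [(bld u.reverse).2.2, List.length_reverse]
  let e : SE := ⟨fun u => (bld u.reverse).1, by
    constructor
    · intro u v huv
      rw [hlen, hlen, huv]
    · intro u b
      rw [List.reverse_append]
      exact (hc _ _ _ _ _).2.2⟩
  refine ⟨e, ?_⟩
  apply Set.Subset.antisymm
  · rintro _ ⟨u, rfl⟩
    exact (bld u.reverse).2.1
  · have : ∀ ℓ, ∀ a ∈ A, a.length = k ℓ → ∃ u, u.length = ℓ ∧ (bld u).1 = a := by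
      intro ℓ
      induction ℓ with
      | zero => intro a ha hl; exact ⟨[], rfl, (hr' a ⟨ha, hl⟩).symm⟩
      | succ ℓ ih =>
        intro b hb' hl
        obtain ⟨a, ha, hal, i, hi⟩ := h3 ℓ b hb' hl
        obtain ⟨u, rfl, rfl⟩ := ih a ha hal
        refine ⟨i :: u, by simp, ?_⟩
        rw [hb]
        exact (hc' _ _ _ _ _ b ⟨hb', hl, hi⟩).symm
    intro a ha
    obtain ⟨ℓ, hℓ⟩ := h1 a ha
    obtain ⟨u, -, hu⟩ := this ℓ a ha hℓ
    refine ⟨u.reverse, ?_⟩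
    show (bld u.reverse.reverse).1 = a
    rw [List.reverse_reverse, hu]

theorem exists_tree (A : Sinf) : ∃ e : SE, e.tree = A := by
  obtain ⟨e, he⟩ := exists_range A.2
  exact ⟨e, Subtype.ext he⟩

theorem exists_factor (e e' : SE) (h : Set.range e'.val ⊆ Set.range e.val) :
    ∃ g : SE, e' = e * g := by
  choose g hg using fun u => h ⟨u, rfl⟩
  refine ⟨⟨g, ?_, ?_⟩, ?_⟩
  · intro u v huv
    rw [← e.2.len_eq_iff]
    rw [hg, hg]
    exact e'.2.len _ _ huv
  · intro u b
    apply e.2.reflect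
    rw [hg, hg]
    exact e'.2.ext u b
  · ext1 u
    exact (hg u).symm

/-- a level of a strong embedding determines everything below it -/
theorem level_det (g g' : SE) : ∀ ℓ ℓ' : ℕ,
    (∀ z, (∃ u : List Bool, u.length = ℓ ∧ g u = z) ↔ ∃ u : List Bool, u.length = ℓ' ∧ g' u = z) →
    ℓ = ℓ' ∧ ∀ u : List Bool, u.length ≤ ℓ → g u = g' u := by
  -- auxiliary facts
  have aux0 : ∀ (g g' : SE) (ℓ' : ℕ),
      (∀ z, (∃ u : List Bool, u.length = 0 ∧ g u = z) ↔
        ∃ u : List Bool, u.length = ℓ' ∧ g' u = z) → ℓ' = 0 := by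
    intro g g' ℓ' h
    by_contra hne
    obtain ⟨m, rfl⟩ := Nat.exists_eq_succ_of_ne_zero hne
    have key : ∀ b : Bool, g' (List.replicate m false ++ [b]) = g [] := by
      intro b
      obtain ⟨u, hu, h1⟩ := (h (g' (List.replicate m false ++ [b]))).2 ⟨_, by simp, rfl⟩
      rw [← h1, List.eq_nil_of_length_eq_zero hu]
    have := g'.2.inj ((key true).trans (key false).symm)
    simp at this
  have aux1 : ∀ (g g' : SE) (ℓ ℓ' : ℕ),
      (∀ z, (∃ u : List Bool, u.length = ℓ + 1 ∧ g u = z) ↔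
        ∃ u : List Bool, u.length = ℓ' + 1 ∧ g' u = z) → g'.lv ℓ' ≤ g.lv ℓ := by
    intro g g' ℓ ℓ' h
    by_contra hlt
    rw [not_le] at hlt
    set x := List.replicate ℓ' false with hx
    obtain ⟨u, hu, h1⟩ := (h (g' (x ++ [true]))).2 ⟨_, by simp [hx], rfl⟩
    obtain ⟨w, hw, h2⟩ := (h (g' (x ++ [false]))).2 ⟨_, by simp [hx], rfl⟩
    have p1 : g' x <+: g u := by
      rw [h1]; exact (List.prefix_append _ _).trans (g'.2.ext x true)
    have p2 : g' x <+: g w := by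
      rw [h2]; exact (List.prefix_append _ _).trans (g'.2.ext x false)
    have huw : u = w := by
      induction u using List.reverseRecOn with
      | nil => simp at hu
      | append_singleton u b _ =>
      induction w using List.reverseRecOn with
      | nil => simp at hw
      | append_singleton w c _ =>
        simp at hu hw
        have hgl : (g' x).length = g'.lv ℓ' := rfl
        have q1 : g u ++ [b] <+: g' x := List.prefix_of_prefix_length_le (g.2.ext u b) p1 (by
          rw [List.length_append, lv_eq, hu, hgl]; exact hlt)
        have q2 : g w ++ [c] <+: g' x := List.prefix_of_prefix_length_le (g.2.ext w c) p2 (by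
          rw [List.length_append, lv_eq, hw, hgl]; exact hlt)
        obtain ⟨e1, rfl⟩ := IsSE.append_singleton_eq q1 q2 (g.2.len _ _ (by omega))
        rw [g.2.inj e1]
    rw [huw, h2] at h1
    have := g'.2.inj h1
    simp at this
  have aux2 : ∀ (g g' : SE) (ℓ ℓ' : ℕ), g.lv ℓ = g'.lv ℓ' → 
      (∀ z, (∃ u : List Bool, u.length = ℓ + 1 ∧ g u = z) →
        ∃ u : List Bool, u.length = ℓ' + 1 ∧ g' u = z) →
      ∀ (u : List Bool) (b : Bool), u.length = ℓ → ∃ u' : List Bool, u'.length = ℓ' ∧ g' u' = g u ∧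
        g' (u' ++ [b]) = g (u ++ [b]) := by
    intro g g' ℓ ℓ' hl h u b hu
    obtain ⟨w, hw, h1⟩ := h (g (u ++ [b])) ⟨_, by simp [hu], rfl⟩
    induction w using List.reverseRecOn with
    | nil => simp at hw
    | append_singleton w c _ =>
      simp at hw
      have q1 := g'.2.ext w c
      rw [h1] at q1
      obtain ⟨e1, rfl⟩ := IsSE.append_singleton_eq q1 (g.2.ext u b) (by
        rw [lv_eq, lv_eq, hu, hw, hl])
      exact ⟨w, hw, e1, h1⟩
  intro ℓ
  induction ℓ with
  | zero =>
    intro ℓ' h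
    have h0 := aux0 g g' ℓ' h
    subst h0
    refine ⟨rfl, fun u hu => ?_⟩
    have hu : u.length = 0 := by omega
    obtain ⟨w, hw, h1⟩ := (h (g u)).1 ⟨u, hu, rfl⟩
    rw [← h1, List.eq_nil_of_length_eq_zero hu, List.eq_nil_of_length_eq_zero hw]
  | succ ℓ ih =>
    intro ℓ' h
    cases ℓ' with
    | zero => exact absurd (aux0 g' g (ℓ + 1) (fun z => (h z).symm)) (by omega)
    | succ ℓ' =>
      have hl : g.lv ℓ = g'.lv ℓ' :=
        le_antisymm (aux1 g' g ℓ' ℓ (fun z => (h z).symm)) (aux1 g g' ℓ ℓ' h)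
      obtain ⟨rfl, h2⟩ := ih ℓ' (by
        intro z
        constructor
        · rintro ⟨u, hu, rfl⟩
          obtain ⟨u', hu', h', -⟩ := aux2 g g' ℓ ℓ' hl (fun z => (h z).1) u true hu
          exact ⟨u', hu', h'⟩
        · rintro ⟨u, hu, rfl⟩
          obtain ⟨u', hu', h', -⟩ := aux2 g' g ℓ' ℓ hl.symm (fun z => (h z).2) u true hu
          exact ⟨u', hu', h'⟩)
      refine ⟨rfl, fun u hu => ?_⟩
      rcases hu.lt_or_eq with hu | hu
      · exact h2 u (by omega)
      · induction u using List.reverseRecOn with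
        | nil => simp at hu
        | append_singleton u b _ =>
          simp at hu
          obtain ⟨u', hu', h3, h4⟩ := aux2 g g' ℓ ℓ hl (fun z => (h z).1) u b hu
          have : u' = u := g'.2.inj (h3.trans (h2 u (by omega)))
          rw [← h4, this]

theorem measurable_tree : @Measurable SE Sinf RM.ms _ tree := by
  letI := RM.ms
  refine Measurable.subtype_mk ?_
  rw [measurable_set_iff]
  intro b
  refine measurableSet_setOf.1 ?_
  refine RamseyMonoid.open_CR _ ?_
  rintro e ⟨u, rfl⟩
  refine ⟨u.length + 1, fun g hg => ⟨u, ?_⟩⟩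
  rw [mul_apply, hg u (by omega)]

theorem below_CR (f : Sinf → Sinf) (hf : Measurable f) (b : List Bool) :
    RM.CR {e : SE | b ∈ below (f e.tree).1} := by
  letI := RM.ms
  have h1 : Measurable (fun e : SE => (f e.tree).1) :=
    measurable_subtype_coe.comp (hf.comp measurable_tree)
  rw [measurable_set_iff] at h1
  have h2 : {e : SE | b ∈ below (f e.tree).1} =
      ⋃ a ∈ {a : List Bool | b <+: a}, {e : SE | a ∈ (f e.tree).1} := by
    ext e
    simp [below, and_comm]
  rw [h2]
  exact MeasurableSet.biUnion (Set.to_countable _) (fun a _ => measurableSet_setOf.2 (h1 a))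

end SE

/-- The traciality step in the proof of Lemma 7.2: given a Borel `f` and a nonempty cube
`[s, D]`, there are `B₀ ∈ [s, D]` and `n₀` such that for all `n ≥ n₀` and all `A, A' ≤ B₀`
with `A ∩ B₀(n−1) = A' ∩ B₀(n−1) ≠ ∅`, one has
`⟨f(A)⟩ ∩ B₀(n−1) = ⟨f(A')⟩ ∩ B₀(n−1)`. -/
theorem milliken_traciality (f : Sinf → Sinf) (hf : Measurable f)
    (s : Set (List Bool)) (D : Sinf) (hne : (cubeT s D).Nonempty) :
    ∃ B₀ ∈ cubeT s D, ∃ n₀ : ℕ, ∀ n ≥ n₀, ∀ A A' : Sinf,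
      A.1 ⊆ B₀.1 → A'.1 ⊆ B₀.1 →
      A.1 ∩ lvlSet B₀.1 (n - 1) = A'.1 ∩ lvlSet B₀.1 (n - 1) →
      (A.1 ∩ lvlSet B₀.1 (n - 1)).Nonempty →
      below (f A).1 ∩ lvlSet B₀.1 (n - 1) = below (f A').1 ∩ lvlSet B₀.1 (n - 1) := by
  obtain ⟨B₁, ⟨N, hN⟩, hBD⟩ := hne
  obtain ⟨e₁, rfl⟩ := SE.exists_tree B₁
  let X : List Bool → Set SE := fun b => {e : SE | b ∈ below (f e.tree).1}
  have hX : ∀ b, SE.RM.CR (X b) := SE.below_CR f hf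
  obtain ⟨g, hg, hP⟩ := RamseyMonoid.fusion (R := SE.RM)
    (fun m e => ∀ b ∈ {b : List Bool | b.length < m}, ∀ k ∈ Set.Iic m, ∀ h ∈ SE.RM.T k m,
      SE.RM.Dec (X (e b)) k (e * h)) (by
    intro m
    constructor
    · intro e
      obtain ⟨g, hg, h⟩ := (RamseyMonoid.DH.all (R := SE.RM) (m := m)
        (S := {b : List Bool | b.length < m})
        (Q := fun b x => ∀ k ∈ Set.Iic m, ∀ h ∈ SE.RM.T k m, SE.RM.Dec (X (e b)) k (x * h))
        (List.finite_length_lt Bool m) (fun b _ => RamseyMonoid.DH.allT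
          (Q := fun k x => SE.RM.Dec (X (e b)) k x) (fun k _ => (hX (e b)).dh k))).dense e
      refine ⟨g, hg, fun b hb => ?_⟩
      rw [SE.mul_apply, hg b hb]
      exact h b hb
    · intro e he g hg b hb k hk h hh
      rw [SE.mul_apply, hg b hb, mul_assoc]
      obtain ⟨g', hg', e'⟩ := SE.RM.push hh hg
      rw [e', ← mul_assoc]
      exact (he b hb k hk h hh).her hg') e₁ N
  set e := e₁ * g with he
  have hsub : Set.range e.val ⊆ Set.range e₁.val := by
    rintro _ ⟨u, rfl⟩
    exact ⟨g u, rfl⟩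
  refine ⟨e.tree, ⟨⟨N, ?_⟩, hsub.trans hBD⟩, N + 1, ?_⟩
  · rw [hN]
    ext a
    show a ∈ approxT (Set.range e₁.val) N ↔ a ∈ approxT (Set.range e.val) N
    rw [SE.mem_approxT, SE.mem_approxT]
    refine exists_congr fun u => and_congr_right fun hu => ?_
    rw [he, SE.mul_apply, hg u hu]
  intro n hn A A' hA hA' hAA hAne
  obtain ⟨a, rfl⟩ := SE.exists_tree A
  obtain ⟨a', rfl⟩ := SE.exists_tree A'
  obtain ⟨c, rfl⟩ := SE.exists_factor e a hA
  obtain ⟨c', rfl⟩ := SE.exists_factor e a' hA'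
  obtain ⟨n, rfl⟩ : ∃ n', n = n' + 1 := ⟨n - 1, by omega⟩
  rw [Nat.add_sub_cancel] at *
  change Set.range (e * c).val ∩ lvlSet (Set.range e.val) n =
    Set.range (e * c').val ∩ lvlSet (Set.range e.val) n at hAA
  change (Set.range (e * c).val ∩ lvlSet (Set.range e.val) n).Nonempty at hAne
  have hchar : ∀ (c : SE) (z : List Bool),
      e z ∈ Set.range (e * c).val ∩ lvlSet (Set.range e.val) n ↔
        z.length = n ∧ ∃ u, c u = z := by
    intro c z
    rw [Set.mem_inter_iff, SE.mem_lvlSet]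
    constructor
    · rintro ⟨⟨u, hu⟩, ⟨w, hw, hw'⟩⟩
      rw [e.2.inj hw'] at hw
      exact ⟨hw, u, e.2.inj hu⟩
    · rintro ⟨hz, u, rfl⟩
      exact ⟨⟨u, rfl⟩, ⟨_, hz, rfl⟩⟩
  have hcc : ∀ z : List Bool, (z.length = n ∧ ∃ u, c u = z) ↔ (z.length = n ∧ ∃ u, c' u = z) := by
    intro z
    rw [← hchar, ← hchar, hAA]
  obtain ⟨_, ⟨u, rfl⟩, hu⟩ := hAne
  have hu2 := (hchar c (c u)).1 ⟨⟨u, rfl⟩, hu⟩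
  obtain ⟨u', hu'⟩ := ((hcc _).1 hu2).2
  have hcn : (c u).length = n := hu2.1
  have hcn' : (c' u').length = n := by rw [hu', hcn]
  have hlev : ∀ (c : SE) (u : List Bool), (c u).length = n → ∀ z,
      (∃ w : List Bool, w.length = u.length ∧ c w = z) ↔ (z.length = n ∧ ∃ w, c w = z) := by
    intro c u hcu z
    constructor
    · rintro ⟨w, hw, rfl⟩
      exact ⟨by rw [c.2.len w u hw, hcu], w, rfl⟩
    · rintro ⟨hz, w, rfl⟩
      exact ⟨w, c.2.len_eq_iff.1 (by rw [hz, hcu]), rfl⟩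
  obtain ⟨hl, hagree⟩ := SE.level_det c c' u.length u'.length (by
    intro z
    rw [hlev c u hcn, hlev c' u' hcn', hcc])
  have htr := SE.tr_congr hagree
  obtain ⟨g1, hg1, e1⟩ := SE.tr_fac u.length c
  obtain ⟨g2, hg2, e2⟩ := SE.tr_fac u.length c'
  have hT := SE.tr_mem u.length c u rfl hcn
  have hkm : u.length + 1 ≤ n + 1 := by
    have := c.2.le_len u
    omega
  ext x
  change x ∈ below (f (e * c).tree).1 ∩ lvlSet (Set.range e.val) n ↔
    x ∈ below (f (e * c').tree).1 ∩ lvlSet (Set.range e.val) n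
  rw [Set.mem_inter_iff, Set.mem_inter_iff, SE.mem_lvlSet]
  refine and_congr_left ?_
  rintro ⟨b, hb, rfl⟩
  have hD := hP (n + 1) (by omega) b (by show b.length < n + 1; omega) (u.length + 1) hkm _ hT
  have m1 : e * c = e * SE.tr u.length c * g1 :=
    (congrArg (fun t => e * t) e1).trans (mul_assoc e (SE.tr u.length c) g1).symm
  have m2 : e * c' = e * SE.tr u.length c * g2 := by
    rw [htr]
    exact (congrArg (fun t => e * t) e2).trans (mul_assoc e (SE.tr u.length c') g2).symm
  show e * c ∈ X (e b) ↔ e * c' ∈ X (e b)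
  rw [m1, m2]
  rcases hD with hD | hD
  · exact iff_of_true (hD g1 hg1) (hD g2 hg2)
  · exact iff_of_false (hD g1 hg1) (hD g2 hg2)
end

section
/- For every k ∈ ℕ there exists N ∈ ℕ such that the following holds: for every finite set X, every (k,N)-partition P = {X_0, …, X_{k−1}} of X (i.e., a partition into k pieces with |X_i| ≥ N for all i < k), and every map e : 𝒯(P) → 𝒫(X), there exists a complete section E ∈ 𝒞𝒯(P) such that for all F ⊆ E, either e(F) ⊆ F or e(F) ⊄ E. -/
lemma bad_card {k N : ℕ} {α : Type} [Fintype α] [DecidableEq α] (P : Fin k → Finset α)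
    (hN : ∀ i : Fin k, N ≤ (P i).card) (e : Finset α → Finset α) (I : Finset (Fin k))
    (j : Fin k) (hj : j ∉ I) :
    ((Fintype.piFinset P).filter (fun s => e (I.image s) ∩ P j = {s j})).card * N
      ≤ (Fintype.piFinset P).card := by
  refine (Nat.mul_le_mul_left _ (hN j)).trans ?_
  rw [← Finset.card_product]
  refine Finset.card_le_card_of_injOn (fun p => Function.update p.1 j p.2) ?_ ?_
  · rintro ⟨s, y⟩ h
    simp only [Finset.coe_product, Set.mem_prod, Finset.mem_coe, Finset.mem_filter,
      Fintype.mem_piFinset] at h ⊢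
    intro i
    by_cases hi : i = j
    · subst hi; simpa using h.2
    · simpa [Function.update_of_ne hi] using h.1.1 i
  · rintro ⟨s, y⟩ h ⟨s', y'⟩ h' heq
    simp only [Finset.coe_product, Set.mem_prod, Finset.mem_coe, Finset.mem_filter] at h h'
    dsimp only at heq
    have hoff : ∀ i, i ≠ j → s i = s' i := by
      intro i hi
      have := congrFun heq i
      simpa [Function.update_of_ne hi] using this
    have hy : y = y' := by simpa using congrFun heq j
    have him : I.image s = I.image s' :=
      Finset.image_congr (fun i hi => hoff i (fun h => hj (h ▸ hi)))
    have hsj : s j = s' j := by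
      have h1 := h.1.2
      rw [him, h'.1.2] at h1
      exact (Finset.singleton_injective h1).symm
    have : s = s' := by
      funext i
      by_cases hi : i = j
      · rw [hi, hsj]
      · exact hoff i hi
    rw [this, hy]

/-- Lemma 7.4: for every `k` there is `N` such that for every finite set `X` (modelled as a
finite type `α`), every `(k,N)`-partition `P = {X_0,…,X_{k−1}}` of `X` (pairwise disjoint,
covering, with `|X_i| ≥ N`), and every map `e` on sections of `P` with values in `𝒫(X)`,
there is a complete section `E` of `P` such that for all `F ⊆ E`, either `e(F) ⊆ F` or
`e(F) ⊄ E`. -/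
theorem section_lemma (k : ℕ) :
    ∃ N : ℕ, ∀ (α : Type) [Fintype α] [DecidableEq α] (P : Fin k → Finset α),
      (∀ i j : Fin k, i ≠ j → Disjoint (P i) (P j)) →
      (∀ x : α, ∃ i : Fin k, x ∈ P i) →
      (∀ i : Fin k, N ≤ (P i).card) →
      ∀ e : Finset α → Finset α,
        ∃ E : Finset α, (∀ i : Fin k, (E ∩ P i).card = 1) ∧
          ∀ F ⊆ E, e F ⊆ F ∨ ¬ e F ⊆ E := by
  classical
  refine ⟨2 ^ k * k + 1, ?_⟩
  intro α _ _ P hdisj _ hN e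
  set S := Fintype.piFinset P with hS
  set B : Finset (Fin k) × Fin k → Finset (Fin k → α) := fun p =>
    S.filter (fun s => p.2 ∉ p.1 ∧ e (p.1.image s) ∩ P p.2 = {s p.2}) with hB
  have hBc : ∀ p, (B p).card * (2 ^ k * k + 1) ≤ S.card := by
    rintro ⟨I, j⟩
    by_cases hj : j ∈ I
    · simp [hB, hj]
    · have h := bad_card P hN e I j hj
      rw [← hS] at h
      simpa only [hB, hj, not_false_eq_true, true_and] using h
  have hSpos : 0 < S.card := by
    rw [Finset.card_pos, hS, Fintype.piFinset_nonempty]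
    intro i
    rw [← Finset.card_pos]
    exact lt_of_lt_of_le (Nat.succ_pos _) (hN i)
  have hex : ∃ s ∈ S, ∀ p, s ∉ B p := by
    by_contra! hcon
    have hsub : S ⊆ Finset.univ.biUnion B := by
      intro s hs
      obtain ⟨p, hp⟩ := hcon s hs
      exact Finset.mem_biUnion.2 ⟨p, Finset.mem_univ _, hp⟩
    have h1 : S.card ≤ ∑ p, (B p).card :=
      (Finset.card_le_card hsub).trans Finset.card_biUnion_le
    have h2 : (∑ p, (B p).card) * (2 ^ k * k + 1) ≤ (2 ^ k * k) * S.card := by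
      rw [Finset.sum_mul]
      refine (Finset.sum_le_sum (fun p _ => hBc p)).trans ?_
      simp
    have h3 := (Nat.mul_le_mul_right (2 ^ k * k + 1) h1).trans h2
    nlinarith
  obtain ⟨s, hs, hgood⟩ := hex
  have hsP : ∀ i, s i ∈ P i := Fintype.mem_piFinset.1 hs
  have huniq : ∀ i j, s i ∈ P j → i = j := by
    intro i j h
    by_contra hij
    exact Finset.disjoint_left.1 (hdisj i j hij) (hsP i) h
  refine ⟨Finset.univ.image s, ?_, ?_⟩
  · intro i
    rw [Finset.card_eq_one]
    refine ⟨s i, ?_⟩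
    ext x
    simp only [Finset.mem_inter, Finset.mem_image, Finset.mem_univ, true_and,
      Finset.mem_singleton]
    constructor
    · rintro ⟨⟨l, rfl⟩, h⟩
      rw [huniq l i h]
    · rintro rfl
      exact ⟨⟨i, rfl⟩, hsP i⟩
  · intro F hF
    by_contra! hcon
    obtain ⟨hnot, hE⟩ := hcon
    obtain ⟨x, hx, hxF⟩ := Finset.not_subset.1 hnot
    obtain ⟨j, -, rfl⟩ := Finset.mem_image.1 (hE hx)
    obtain ⟨I, -, rfl⟩ := Finset.subset_image_iff.1 hF
    refine hgood (I, j) ?_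
    simp only [hB, Finset.mem_filter]
    refine ⟨hs, fun h => hxF (Finset.mem_image_of_mem s h), ?_⟩
    ext y
    simp only [Finset.mem_inter, Finset.mem_singleton]
    constructor
    · rintro ⟨hy, hyP⟩
      obtain ⟨l, -, rfl⟩ := Finset.mem_image.1 (hE hy)
      rw [huniq l j hyP]
    · rintro rfl
      exact ⟨hx, hsP j⟩
end

section
/- Let k, N ∈ ℕ with k, N ≥ 1, let X be a finite set, and let P = {X_0, …, X_{k−1}} be a partition of X into k pieces with |X_i| = N for all i < k. For a map e : 𝒯(P) → 𝒫(X), let 𝓑_e be the set of all pairs (F, E) ∈ 𝒯(P) × 𝒞𝒯(P) such that F ⊆ E, e(F) ⊄ F, and e(F) ⊆ E. Then |𝓑_e| ≤ 2^k · (N^k − (N−1)^k). -/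
open Finset in
lemma bpb_count {k N : ℕ} (hk : 1 ≤ k) (hN : 1 ≤ N) (D : Finset (Fin k))
    (S : Finset (Fin k → Fin N)) (c : (Fin k → Fin N) → Fin k × Fin N)
    (hinv : ∀ f g : Fin k → Fin N, (∀ j ∈ D, f j = g j) → c f = c g)
    (hS : ∀ f ∈ S, (c f).1 ∉ D ∧ f (c f).1 = (c f).2) :
    S.card ≤ N ^ (k - 1) := by
  have h1 : (S ×ˢ (univ : Finset (Fin N))).card ≤ (univ : Finset (Fin k → Fin N)).card := by
    apply Finset.card_le_card_of_injOn (fun p => Function.update p.1 (c p.1).1 p.2)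
    · intro p _; simp
    · rintro ⟨f, y⟩ hf ⟨g, z⟩ hg h
      simp only [coe_product, Set.mem_prod, mem_coe] at hf hg
      obtain ⟨hf1, hf2⟩ := hS f hf.1
      obtain ⟨hg1, hg2⟩ := hS g hg.1
      simp only at h
      have hc : c f = c g := by
        apply hinv
        intro j hj
        have := congrFun h j
        rwa [Function.update_of_ne (by rintro rfl; exact hf1 hj),
          Function.update_of_ne (by rintro rfl; exact hg1 hj)] at this
      rw [hc] at h hf2
      have hy : y = z := by simpa using congrFun h (c g).1
      have hfg : f = g := by
        funext j
        by_cases hj : j = (c g).1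
        · rw [hj, hf2, hg2]
        · have := congrFun h j
          rwa [Function.update_of_ne hj, Function.update_of_ne hj] at this
      rw [hy, hfg]
  rw [card_product] at h1
  simp only [card_univ, Fintype.card_fin, Fintype.card_pi, prod_const] at h1
  obtain ⟨m, rfl⟩ : ∃ m, k = m + 1 := ⟨k - 1, by omega⟩
  rw [pow_succ] at h1
  exact Nat.le_of_mul_le_mul_right h1 hN

lemma bpb_arith {k N : ℕ} (hk : 1 ≤ k) (hN : 1 ≤ N) :
    N ^ (k - 1) ≤ N ^ k - (N - 1) ^ k := by
  obtain ⟨m, rfl⟩ : ∃ m, k = m + 1 := ⟨k - 1, by omega⟩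
  obtain ⟨n, rfl⟩ : ∃ n, N = n + 1 := ⟨N - 1, by omega⟩
  simp only [Nat.add_sub_cancel]
  apply Nat.le_sub_of_add_le
  have : n ^ m ≤ (n + 1) ^ m := Nat.pow_le_pow_left (by omega) m
  rw [pow_succ, pow_succ]
  nlinarith


/-- The counting bound from the proof of Lemma 7.4: if `P = {X_0,…,X_{k−1}}` is a partition
of a finite set `X` into `k` pieces each of size `N`, and `e` is a map from sections of `P`
to `𝒫(X)`, then the set `𝓑_e` of pairs `(F, E)` with `F` a section, `E` a complete section,
`F ⊆ E`, `e(F) ⊄ F` and `e(F) ⊆ E` has size at most `2^k · (N^k − (N−1)^k)`. -/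
theorem bad_pairs_bound (k N : ℕ) (hk : 1 ≤ k) (hN : 1 ≤ N)
    (α : Type) [Fintype α] [DecidableEq α] (P : Fin k → Finset α)
    (hdisj : ∀ i j : Fin k, i ≠ j → Disjoint (P i) (P j))
    (hcover : ∀ x : α, ∃ i : Fin k, x ∈ P i)
    (hcard : ∀ i : Fin k, (P i).card = N)
    (e : Finset α → Finset α) :
    {p : Finset α × Finset α |
        (∀ i : Fin k, (p.1 ∩ P i).card ≤ 1) ∧ (∀ i : Fin k, (p.2 ∩ P i).card = 1) ∧
        p.1 ⊆ p.2 ∧ ¬ e p.1 ⊆ p.1 ∧ e p.1 ⊆ p.2}.ncard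
      ≤ 2 ^ k * (N ^ k - (N - 1) ^ k) := by

  classical
  have hg : ∀ i, ∃ g : Fin N → α, Function.Injective g ∧ ∀ x, x ∈ P i ↔ ∃ y, g y = x := by
    intro i
    let q := (P i).equivFinOfCardEq (hcard i)
    refine ⟨fun y => (q.symm y).1, fun a b h => q.symm.injective (Subtype.ext h), fun x => ?_⟩
    constructor
    · intro hx
      exact ⟨q ⟨x, hx⟩, by simp⟩
    · rintro ⟨y, rfl⟩
      exact (q.symm y).2
  choose g ginj gP using hg
  have gmem : ∀ i y, g i y ∈ P i := fun i y => (gP i _).2 ⟨y, rfl⟩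
  have gidx : ∀ i j y z, g i y = g j z → i = j ∧ y = z := by
    intro i j y z h
    have hij : i = j := by
      by_contra hne
      exact Finset.disjoint_left.1 (hdisj i j hne) (gmem i y) (h ▸ gmem j z)
    subst hij
    exact ⟨rfl, ginj _ h⟩
  have hsurj : ∀ x, ∃ p : Fin k × Fin N, g p.1 p.2 = x := by
    intro x
    obtain ⟨i, hi⟩ := hcover x
    obtain ⟨y, hy⟩ := (gP i x).1 hi
    exact ⟨(i, y), hy⟩
  choose inv hinv using hsurj
  have hc : ∀ F : Finset α, ∃ p : Fin k × Fin N, ¬ e F ⊆ F → g p.1 p.2 ∈ e F ∧ g p.1 p.2 ∉ F := by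
    intro F
    by_cases h : e F ⊆ F
    · exact ⟨(⟨0, hk⟩, ⟨0, hN⟩), fun h' => absurd h h'⟩
    · obtain ⟨x, hx, hx'⟩ := Finset.not_subset.1 h
      exact ⟨inv x, fun _ => by rw [hinv]; exact ⟨hx, hx'⟩⟩
  choose c hc using hc
  let fF : Finset (Fin k) → (Fin k → Fin N) → Finset α := fun D f => D.image (fun i => g i (f i))
  let S : Finset (Fin k) → Finset (Fin k → Fin N) := fun D => Finset.univ.filter
    (fun f => ¬ e (fF D f) ⊆ fF D f ∧ e (fF D f) ⊆ fF Finset.univ f)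
  let T : Finset ((_ : Finset (Fin k)) × (Fin k → Fin N)) := Finset.univ.sigma S
  have hT : T.card ≤ 2 ^ k * N ^ (k - 1) := by
    rw [Finset.card_sigma]
    calc _ ≤ ∑ D : Finset (Fin k), N ^ (k - 1) := by
          apply Finset.sum_le_sum
          intro D _
          apply bpb_count hk hN D (S D) (fun f => c (fF D f))
          · intro f f' h
            have : fF D f = fF D f' := Finset.image_congr (fun j hj => by simp only [h j hj])
            simp only [this]
          · intro f hf
            obtain ⟨h1, h2⟩ := (Finset.mem_filter.1 hf).2
            obtain ⟨h3, h4⟩ := hc _ h1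
            obtain ⟨i, _, hi⟩ := Finset.mem_image.1 (h2 h3)
            obtain ⟨h5, h6⟩ := gidx _ _ _ _ hi
            have h7 : f (c (fF D f)).1 = (c (fF D f)).2 := by rw [← h5]; exact h6
            refine ⟨fun hD => h4 ?_, h7⟩
            exact Finset.mem_image.2 ⟨_, hD, by simp only [h7]⟩
      _ = _ := by simp
  refine le_trans ?_ (hT.trans (Nat.mul_le_mul_left _ (bpb_arith hk hN)))
  refine le_trans (Set.ncard_le_ncard (t := ((T.image
    (fun t => (fF t.1 t.2, fF Finset.univ t.2)) : Finset _) : Set (Finset α × Finset α))) ?_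
    (Finset.finite_toSet _)) ?_
  · rintro ⟨F, E⟩ ⟨-, hE, hFE, h1, h2⟩
    simp only at hE hFE h1 h2
    have hf : ∀ i, ∃ y, E ∩ P i = {g i y} := by
      intro i
      obtain ⟨a, ha⟩ := Finset.card_eq_one.1 (hE i)
      have : a ∈ E ∩ P i := by rw [ha]; simp
      obtain ⟨y, rfl⟩ := (gP i a).1 (Finset.mem_inter.1 this).2
      exact ⟨y, ha⟩
    choose f hf using hf
    have key : ∀ x ∈ E, ∃ i, g i (f i) = x := by
      intro x hx
      obtain ⟨i, hi⟩ := hcover x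
      have : x ∈ E ∩ P i := Finset.mem_inter.2 ⟨hx, hi⟩
      rw [hf, Finset.mem_singleton] at this
      exact ⟨i, this.symm⟩
    have hE' : fF Finset.univ f = E := by
      ext x
      constructor
      · intro hx
        obtain ⟨i, _, rfl⟩ := Finset.mem_image.1 hx
        have : g i (f i) ∈ E ∩ P i := by rw [hf]; simp
        exact (Finset.mem_inter.1 this).1
      · intro hx
        obtain ⟨i, rfl⟩ := key x hx
        exact Finset.mem_image.2 ⟨i, Finset.mem_univ _, rfl⟩
    have hF' : fF (Finset.univ.filter (fun i => g i (f i) ∈ F)) f = F := by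
      ext x
      constructor
      · intro hx
        obtain ⟨i, hi, rfl⟩ := Finset.mem_image.1 hx
        exact (Finset.mem_filter.1 hi).2
      · intro hx
        obtain ⟨i, rfl⟩ := key x (hFE hx)
        exact Finset.mem_image.2 ⟨i, Finset.mem_filter.2 ⟨Finset.mem_univ _, hx⟩, rfl⟩
    rw [Finset.mem_coe, Finset.mem_image]
    refine ⟨⟨Finset.univ.filter (fun i => g i (f i) ∈ F), f⟩, ?_, ?_⟩
    · refine Finset.mem_sigma.2 ⟨Finset.mem_univ _, Finset.mem_filter.2 ⟨Finset.mem_univ _, ?_⟩⟩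
      simp only [hF', hE']
      exact ⟨h1, h2⟩
    · simp only [hF', hE']
  · rw [Set.ncard_coe_finset]
    exact Finset.card_image_le
end

section
/- Let k, N ∈ ℕ. Suppose that for every finite set Z and every partition Q = {Z_0, …, Z_{k−1}} of Z into k pieces with |Z_i| = N for all i < k, and every map e : 𝒯(Q) → 𝒫(Z), there exists E ∈ 𝒞𝒯(Q) such that for all F ⊆ E, either e(F) ⊆ F or e(F) ⊄ E. Then for every finite set X, every (k,N)-partition P = {X_0, …, X_{k−1}} of X (a partition into k pieces with |X_i| ≥ N for all i < k), and every map e : 𝒯(P) → 𝒫(X), there exists E ∈ 𝒞𝒯(P) such that for all F ⊆ E, either e(F) ⊆ F or e(F) ⊄ E. -/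
/-- The reduction step in the proof of Lemma 7.4: if the section lemma conclusion holds for
all partitions into `k` pieces each of size exactly `N`, then it holds for all
`(k,N)`-partitions (pieces of size at least `N`). -/
theorem section_lemma_reduction (k N : ℕ)
    (hyp : ∀ (β : Type) [Fintype β] [DecidableEq β] (Q : Fin k → Finset β),
      (∀ i j : Fin k, i ≠ j → Disjoint (Q i) (Q j)) →
      (∀ z : β, ∃ i : Fin k, z ∈ Q i) →
      (∀ i : Fin k, (Q i).card = N) →
      ∀ e : Finset β → Finset β,
        ∃ E : Finset β, (∀ i : Fin k, (E ∩ Q i).card = 1) ∧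
          ∀ F ⊆ E, e F ⊆ F ∨ ¬ e F ⊆ E) :
    ∀ (α : Type) [Fintype α] [DecidableEq α] (P : Fin k → Finset α),
      (∀ i j : Fin k, i ≠ j → Disjoint (P i) (P j)) →
      (∀ x : α, ∃ i : Fin k, x ∈ P i) →
      (∀ i : Fin k, N ≤ (P i).card) →
      ∀ e : Finset α → Finset α,
        ∃ E : Finset α, (∀ i : Fin k, (E ∩ P i).card = 1) ∧
          ∀ F ⊆ E, e F ⊆ F ∨ ¬ e F ⊆ E := by
  intro α _ _ P hd hc hN e
  choose Z hZP hZc using fun i => Finset.exists_subset_card_eq (hN i)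
  let U : Finset α := Finset.univ.biUnion Z
  have hZU : ∀ i x, x ∈ Z i → x ∈ U := fun i x hx =>
    Finset.mem_biUnion.2 ⟨i, Finset.mem_univ i, hx⟩
  have hUZ : ∀ x, x ∈ U → ∃ i, x ∈ Z i := fun x hx => by
    obtain ⟨i, -, h⟩ := Finset.mem_biUnion.1 hx
    exact ⟨i, h⟩
  let emb : {x // x ∈ U} ↪ α := Function.Embedding.subtype _
  obtain ⟨E, hE, hF⟩ := hyp {x // x ∈ U} (fun i => (Z i).subtype (· ∈ U))
    (by
      intro i j hij
      rw [Finset.disjoint_left]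
      intro x hx hx'
      rw [Finset.mem_subtype] at hx hx'
      exact Finset.disjoint_left.1 (hd i j hij) (hZP i hx) (hZP j hx'))
    (by
      intro z
      obtain ⟨i, hi⟩ := hUZ z.1 z.2
      exact ⟨i, Finset.mem_subtype.2 hi⟩)
    (by
      intro i
      rw [Finset.card_subtype, Finset.filter_true_of_mem (hZU i), hZc])
    (fun F => (e (F.map emb)).subtype (· ∈ U))
  have hmem : ∀ (S : Finset {x // x ∈ U}) (x : α), x ∈ S.map emb ↔ ∃ h : x ∈ U, (⟨x, h⟩ : {x // x ∈ U}) ∈ S := by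
    intro S x
    simp [emb]
  refine ⟨E.map emb, ?_, ?_⟩
  · intro i
    rw [← hE i, ← Finset.card_map emb]
    congr 1
    ext x
    rw [Finset.mem_inter, hmem, hmem]
    constructor
    · rintro ⟨⟨h, hx⟩, hxP⟩
      refine ⟨h, Finset.mem_inter.2 ⟨hx, Finset.mem_subtype.2 ?_⟩⟩
      obtain ⟨j, hj⟩ := hUZ x h
      by_cases hij : i = j
      · rw [hij]; exact hj
      · exact absurd (hZP j hj) (Finset.disjoint_left.1 (hd i j hij) hxP)
    · rintro ⟨h, hx⟩
      rw [Finset.mem_inter, Finset.mem_subtype] at hx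
      exact ⟨⟨h, hx.1⟩, hZP i hx.2⟩
  · intro F hFE
    have hFm : (F.subtype (· ∈ U)).map emb = F := by
      ext x
      rw [hmem]
      constructor
      · rintro ⟨h, hx⟩
        exact Finset.mem_subtype.1 hx
      · intro hx
        obtain ⟨h, -⟩ := (hmem _ _).1 (hFE hx)
        exact ⟨h, Finset.mem_subtype.2 hx⟩
    by_cases hsub : e F ⊆ E.map emb
    · left
      have hFE' : F.subtype (· ∈ U) ⊆ E := by
        rw [← Finset.map_subset_map (f := emb), hFm]; exact hFE
      have key := hF _ hFE'
      simp only [hFm] at key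
      rcases key with key | key
      · intro x hx
        obtain ⟨h, -⟩ := (hmem _ _).1 (hsub hx)
        exact Finset.mem_subtype.1 (key (Finset.mem_subtype.2 hx : (⟨x, h⟩ : {x // x ∈ U}) ∈ _))
      · exfalso
        apply key
        intro x hx
        obtain ⟨h, h'⟩ := (hmem _ _).1 (hsub (Finset.mem_subtype.1 hx))
        exact h'
    · exact Or.inr hsub
end
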